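/- arXiv:1107.2878 — 2 statements merged into one kernel-verified Lean document; each statement's English description precedes it below -/
import Mathlib

section
/- Let 0 < ν ≤ 1, 0 < α < 1, λ > 0 and t > 0. Then ∫_0^∞ E_{ν,1}(−λ s^ν) · t^{−α} W_{−α,1−α}(−s t^{−α}) ds = E_{να,1}(−λ t^{να}), where E_{μ,1}(x) = ∑_{h=0}^∞ x^h/Γ(μh+1) and W_{−α,1−α}(−x) = ∑_{r=0}^∞ (−x)^r/(r! · Γ(1 − α(r+1))) (with the convention 1/Γ(w) = 0 when w is a nonpositive integer). -/
/-!
The series of `E_{ν,1}(-c x^ν)` is integrated termwise against `M(x) = W_{-α,1-α}(-x)`. The moments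
`∫₀^∞ x^p M(x) dx = Γ(p+1) / Γ(αp+1)` turn it into the series of `E_{να,1}(-c)`, and the substitution
`x = s t^{-α}` introduces `t`. Besides the moments, this needs a bound on `|M|` that makes the
exchange of sum and integral legitimate: since `E_{ν,1}(c x^ν)` grows like `exp(c^{1/ν} x)`, `M` has
to be `O(exp(-κ x))` with `κ` as large as desired.

Both facts come from the contour integral `M(x) = (2πi)⁻¹ ∫ e^z z^{α-1} e^{-x z^α} dz`. The contour
consists of the two rays from `a > 0` in the directions `e^{±iψ}`, where `π/2 < ψ < π` and
`αψ < π/2`. The last condition gives `Re z^α ≥ cos(αψ) (a sin ψ)^α` on the contour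
(`le_re_ray_cpow`), hence exponential decay of `M` at a rate which tends to infinity with `a`. The
moments follow from Fubini's theorem and the Laplace transform of `x^p` (`laplace_rpow`), which
reduce them to Hankel's formula for `1 / Γ(αp+1)`. See `exists_moment_bound`.

The contour integral for `M` itself is obtained by inserting Hankel's formula for each coefficient
`1 / Γ(1 - α(n+1))` of the Wright series (`wrightW_neg`). Hankel's formula on this contour,
`hankel_eq`, holds for `0 < s < 1` because the integral does not depend on `a` (its derivative in
`a` is an integral of a derivative along the rays) and for `a = 0` is an instance of Euler's
reflection formula. It extends to all real `s` by continuity at the integers and by the recurrence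
`1 / Γ(s) = s / Γ(s+1)`, which the contour integral satisfies by integration by parts.
-/

open MeasureTheory

/-- The Mittag--Leffler function `E_{μ,β}(x) = ∑_{h≥0} x^h/Γ(μh+β)`. -/
noncomputable def mittagLeffler (μ β x : ℝ) : ℝ :=
  ∑' h : ℕ, x ^ h / Real.Gamma (μ * h + β)

/-- The Wright function `W_{−α,1−α}` evaluated at `x`:
`W_{−α,1−α}(x) = ∑_{r≥0} x^r/(r! Γ(1−α(r+1)))`.
(Note `Real.Gamma` vanishes at nonpositive integers, so the convention
`1/Γ = 0` there is automatic.) -/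
noncomputable def wrightW (α x : ℝ) : ℝ :=
  ∑' r : ℕ, x ^ r / ((Nat.factorial r : ℝ) * Real.Gamma (1 - α * ((r : ℝ) + 1)))

namespace WrightSubordination

open Set Filter Topology

/-! ### The contour and the integrand of Hankel's formula -/

/-- The point `a + r e^{iψ}` of the ray which issues from `a` in the direction `e^{iψ}`. -/
noncomputable def ray (ψ a r : ℝ) : ℂ := a + r * Complex.exp (ψ * Complex.I)

/-- The integrand `e^z z^{-s}` of Hankel's formula for `1/Γ(s)`. -/
noncomputable def hankelF (s : ℝ) (z : ℂ) : ℂ := Complex.exp z * z ^ (-(s : ℂ))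

/-- Hankel's contour integral for `1/Γ(s)`. The contour consists of the ray from `a` in direction
`e^{iψ}` and its complex conjugate; by symmetry its two halves combine to an imaginary part. -/
noncomputable def hankel (ψ a s : ℝ) : ℝ :=
  1 / Real.pi *
    (∫ r in Ioi (0 : ℝ), Complex.exp (ψ * Complex.I) * hankelF s (ray ψ a r)).im

variable {ψ a r s : ℝ}

lemma ray_re (ψ a r : ℝ) : (ray ψ a r).re = a + r * Real.cos ψ := by
  simp [ray, Complex.exp_ofReal_mul_I_re]

lemma ray_im (ψ a r : ℝ) : (ray ψ a r).im = r * Real.sin ψ := by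
  simp [ray, Complex.exp_ofReal_mul_I_im]

lemma ray_zero (ψ a : ℝ) : ray ψ a 0 = a := by simp [ray]

lemma norm_dir (ψ : ℝ) : ‖Complex.exp (ψ * Complex.I)‖ = 1 := Complex.norm_exp_ofReal_mul_I ψ

lemma ray_mem_slitPlane (h2 : ψ < Real.pi) (h1 : Real.pi / 2 < ψ) (ha : 0 ≤ a) (hr : 0 ≤ r)
    (h : a ≠ 0 ∨ r ≠ 0) : ray ψ a r ∈ Complex.slitPlane := by
  have hs : 0 < Real.sin ψ := Real.sin_pos_of_pos_of_lt_pi (by linarith [Real.pi_pos]) h2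
  rcases hr.eq_or_lt with rfl | hr
  · left
    have : a ≠ 0 := by simpa using h
    rw [ray_re]
    simpa using lt_of_le_of_ne ha this.symm
  · right
    rw [ray_im]
    positivity

lemma mul_sin_le_norm_ray (ψ a r : ℝ) : a * Real.sin ψ ≤ ‖ray ψ a r‖ := by
  refine (le_abs_self _).trans
    ((Real.abs_le_sqrt ?_).trans_eq (Complex.norm_eq_sqrt_sq_add_sq _).symm)
  rw [ray_re, ray_im]
  have e : (a + r * Real.cos ψ) ^ 2 + (r * Real.sin ψ) ^ 2
      = (r + a * Real.cos ψ) ^ 2 + (a * Real.sin ψ) ^ 2 := by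
    linear_combination (r ^ 2 - a ^ 2) * Real.sin_sq_add_cos_sq ψ
  rw [e]
  exact le_add_of_nonneg_left (sq_nonneg _)

lemma mul_sin_le_norm_ray' (ψ a r : ℝ) : r * Real.sin ψ ≤ ‖ray ψ a r‖ := by
  rw [← ray_im ψ a r]
  exact (le_abs_self _).trans (Complex.abs_im_le_norm _)

lemma norm_ray_le (ψ : ℝ) (ha : 0 ≤ a) (hr : 0 ≤ r) : ‖ray ψ a r‖ ≤ a + r := by
  unfold ray
  refine (norm_add_le _ _).trans ?_
  rw [norm_mul, norm_dir, Complex.norm_real, Complex.norm_real]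
  simp [abs_of_nonneg, ha, hr]

lemma norm_hankelF (s : ℝ) (z : ℂ) : ‖hankelF s z‖ = Real.exp z.re * ‖z‖ ^ (-s) := by
  rw [hankelF, norm_mul, Complex.norm_exp, ← Complex.ofReal_neg, Complex.norm_cpow_real]

/-- The argument along the ray stays between `0` and `ψ`. -/
lemma arg_ray (h1 : Real.pi / 2 < ψ) (h2 : ψ < Real.pi) (ha : 0 < a) (hr : 0 ≤ r) :
    0 ≤ (ray ψ a r).arg ∧ (ray ψ a r).arg ≤ ψ := by
  have hs : 0 < Real.sin ψ := Real.sin_pos_of_pos_of_lt_pi (by linarith [Real.pi_pos]) h2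
  have h0 : 0 ≤ (ray ψ a r).arg := by
    rw [Complex.arg_nonneg_iff, ray_im]; positivity
  refine ⟨h0, ?_⟩
  by_contra! hlt
  have hpi := Complex.arg_le_pi (ray ψ a r)
  have hneg : Real.sin (ψ - (ray ψ a r).arg) < 0 :=
    Real.sin_neg_of_neg_of_neg_pi_lt (by linarith) (by linarith)
  have hz : ray ψ a r ≠ 0 := Complex.slitPlane_ne_zero (ray_mem_slitPlane h2 h1 ha.le hr (Or.inl ha.ne'))
  have hn : 0 < ‖ray ψ a r‖ := norm_pos_iff.2 hz
  have hre := Complex.norm_mul_cos_arg (ray ψ a r)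
  have him := Complex.norm_mul_sin_arg (ray ψ a r)
  rw [ray_re] at hre
  rw [ray_im] at him
  -- `sin (ψ - arg z) * |z|` is the distance `a sin ψ` from the origin to the line of the ray
  have : ‖ray ψ a r‖ * Real.sin (ψ - (ray ψ a r).arg) = a * Real.sin ψ := by
    rw [Real.sin_sub]
    linear_combination Real.sin ψ * hre - Real.cos ψ * him
  nlinarith [mul_pos ha hs]

lemma hasDerivAt_hankelF (s : ℝ) {z : ℂ} (hz : z ∈ Complex.slitPlane) :
    HasDerivAt (hankelF s) (hankelF s z - s * hankelF (s + 1) z) z := by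
  have h := (Complex.hasDerivAt_exp z).mul
    ((hasDerivAt_id z).cpow_const (c := -(s : ℂ)) hz)
  refine h.congr_deriv ?_
  simp only [hankelF, id]
  rw [show -((s + 1 : ℝ) : ℂ) = -(s : ℂ) - 1 by push_cast; ring]
  ring

lemma hasDerivAt_ray (ψ a r : ℝ) :
    HasDerivAt (fun r => ray ψ a r) (Complex.exp (ψ * Complex.I)) r := by
  have := ((Complex.ofRealCLM.hasDerivAt (x := r)).mul_const
    (Complex.exp (ψ * Complex.I))).const_add (a : ℂ)
  simpa [ray] using this

lemma hasDerivAt_ray_left (ψ a r : ℝ) :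
    HasDerivAt (fun a => ray ψ a r) 1 a := by
  have := (Complex.ofRealCLM.hasDerivAt (x := a)).add_const
    (r * Complex.exp (ψ * Complex.I))
  simpa [ray] using this

lemma continuous_ray (ψ a : ℝ) : Continuous fun r => ray ψ a r := by
  unfold ray; fun_prop

lemma continuousOn_hankelF (s : ℝ) : ContinuousOn (hankelF s) Complex.slitPlane :=
  fun _ hz => (hasDerivAt_hankelF s hz).continuousAt.continuousWithinAt

lemma continuousOn_hankelF_ray (h1 : Real.pi / 2 < ψ) (h2 : ψ < Real.pi) (ha : 0 < a) (s : ℝ) :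
    ContinuousOn (fun r => hankelF s (ray ψ a r)) (Ici 0) :=
  (continuousOn_hankelF s).comp (continuous_ray ψ a).continuousOn
    fun _ hr => ray_mem_slitPlane h2 h1 ha.le hr (Or.inl ha.ne')

/-- Powers of the modulus along the ray are bounded by powers of `a + r`. -/
lemma exists_norm_ray_rpow_le (h1 : Real.pi / 2 < ψ) (h2 : ψ < Real.pi) (ha : 0 < a) (β : ℝ) :
    ∃ C, 0 ≤ C ∧ ∀ r, 0 ≤ r → ‖ray ψ a r‖ ^ β ≤ C * (a + r) ^ max β 0 := by
  have hs : 0 < Real.sin ψ := Real.sin_pos_of_pos_of_lt_pi (by linarith [Real.pi_pos]) h2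
  have hm : 0 < a * Real.sin ψ := by positivity
  rcases le_total β 0 with hβ | hβ
  · refine ⟨(a * Real.sin ψ) ^ β, by positivity, fun r hr => ?_⟩
    rw [max_eq_right hβ, Real.rpow_zero, mul_one]
    exact Real.rpow_le_rpow_of_nonpos hm (mul_sin_le_norm_ray ψ a r) hβ
  · refine ⟨1, zero_le_one, fun r hr => ?_⟩
    rw [max_eq_left hβ, one_mul]
    exact Real.rpow_le_rpow (norm_nonneg _) (norm_ray_le ψ ha.le hr) hβ

lemma isBigO_add_rpow_exp (a β : ℝ) {b : ℝ} (hb : 0 < b) :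
    (fun r : ℝ => (a + r) ^ β) =O[atTop] fun r => Real.exp (b * r) := by
  have h := (isLittleO_rpow_exp_pos_mul_atTop β hb).isBigO.comp_tendsto
    (tendsto_atTop_add_const_left atTop a tendsto_id)
  refine h.trans ?_
  have : (fun x : ℝ => Real.exp (b * x)) ∘ (fun x => a + id x)
      = fun r => Real.exp (b * a) * Real.exp (b * r) := by
    ext x; simp [mul_add, Real.exp_add]
  rw [this]
  exact Asymptotics.isBigO_const_mul_self _ _ _

lemma hankelF_ray_isBigO (h1 : Real.pi / 2 < ψ) (h2 : ψ < Real.pi) (ha : 0 < a) (s : ℝ) :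
    (fun r => hankelF s (ray ψ a r)) =O[atTop]
      fun r => Real.exp (-(-Real.cos ψ / 2) * r) := by
  have hc : 0 < -Real.cos ψ := by
    linarith [Real.cos_neg_of_pi_div_two_lt_of_lt h1 (by linarith [Real.pi_pos])]
  obtain ⟨C, hC, hle⟩ := exists_norm_ray_rpow_le h1 h2 ha (-s)
  have hb : (fun r => hankelF s (ray ψ a r)) =O[atTop]
      fun r => Real.exp (Real.cos ψ * r) * (a + r) ^ max (-s) 0 := by
    refine Asymptotics.IsBigO.of_bound (Real.exp a * C) ?_
    filter_upwards [eventually_ge_atTop 0] with r hr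
    have h3 := hle r hr
    rw [norm_hankelF, ray_re, Real.norm_of_nonneg (by positivity), Real.exp_add,
      mul_comm r]
    calc _ ≤ Real.exp a * Real.exp (Real.cos ψ * r) * (C * (a + r) ^ max (-s) 0) := by gcongr
      _ = _ := by ring
  refine hb.trans ?_
  have h4 := (Asymptotics.isBigO_refl (fun r => Real.exp (Real.cos ψ * r)) atTop).mul
    (isBigO_add_rpow_exp a (max (-s) 0) (half_pos hc))
  refine h4.congr_right fun r => ?_
  rw [← Real.exp_add]
  ring_nf

lemma integrableOn_hankelF_ray (h1 : Real.pi / 2 < ψ) (h2 : ψ < Real.pi) (ha : 0 < a) (s : ℝ) :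
    IntegrableOn (fun r => hankelF s (ray ψ a r)) (Ioi 0) := by
  have hc : 0 < -Real.cos ψ := by
    linarith [Real.cos_neg_of_pi_div_two_lt_of_lt h1 (by linarith [Real.pi_pos])]
  have hcont := continuousOn_hankelF_ray h1 h2 ha s
  have h := integrable_of_isBigO_exp_neg (half_pos hc) hcont.norm
    (hankelF_ray_isBigO h1 h2 ha s).norm_left
  exact (integrable_norm_iff
    ((hcont.mono Ioi_subset_Ici_self).aestronglyMeasurable measurableSet_Ioi)).1 h

/-- The fundamental theorem of calculus along the ray. The value at the end point `a` is real,
so that it does not contribute to the imaginary part which defines `hankel`. -/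
lemma integral_deriv_hankelF (h1 : Real.pi / 2 < ψ) (h2 : ψ < Real.pi) (ha : 0 < a) (s : ℝ) :
    ∫ r in Ioi (0 : ℝ), Complex.exp (ψ * Complex.I) *
      (hankelF s (ray ψ a r) - s * hankelF (s + 1) (ray ψ a r)) = -hankelF s a := by
  have hc : 0 < -Real.cos ψ := by
    linarith [Real.cos_neg_of_pi_div_two_lt_of_lt h1 (by linarith [Real.pi_pos])]
  have hd : ∀ r ∈ Ici (0 : ℝ), HasDerivAt (fun r => hankelF s (ray ψ a r))
      (Complex.exp (ψ * Complex.I) *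
        (hankelF s (ray ψ a r) - s * hankelF (s + 1) (ray ψ a r))) r := fun r hr => by
    rw [mul_comm]
    exact (hasDerivAt_hankelF s (ray_mem_slitPlane h2 h1 ha.le hr (Or.inl ha.ne'))).comp r
      (hasDerivAt_ray ψ a r)
  have hi : IntegrableOn (fun r => Complex.exp (ψ * Complex.I) *
        (hankelF s (ray ψ a r) - s * hankelF (s + 1) (ray ψ a r))) (Ioi 0) :=
    ((integrableOn_hankelF_ray h1 h2 ha s).sub
      ((integrableOn_hankelF_ray h1 h2 ha (s + 1)).const_mul _)).const_mul _
  have ht : Tendsto (fun r => hankelF s (ray ψ a r)) atTop (𝓝 0) := by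
    refine (hankelF_ray_isBigO h1 h2 ha s).trans_tendsto ?_
    refine Real.tendsto_exp_atBot.comp ?_
    exact tendsto_id.const_mul_atTop_of_neg (by linarith)
  rw [integral_Ioi_of_hasDerivAt_of_tendsto' hd hi ht, ray_zero, zero_sub]

lemma hankelF_ofReal_im (ha : 0 ≤ a) (s : ℝ) : (hankelF s a).im = 0 := by
  rw [hankelF, ← Complex.ofReal_neg, ← Complex.ofReal_cpow ha, ← Complex.ofReal_exp,
    ← Complex.ofReal_mul, Complex.ofReal_im]

/-- The counterpart of `1 / Γ(s) = s / Γ(s + 1)`, by integration by parts. -/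
lemma hankel_eq_mul_hankel_add_one (h1 : Real.pi / 2 < ψ) (h2 : ψ < Real.pi) (ha : 0 < a)
    (s : ℝ) : hankel ψ a s = s * hankel ψ a (s + 1) := by
  have h := congrArg Complex.im (integral_deriv_hankelF h1 h2 ha s)
  rw [Complex.neg_im, hankelF_ofReal_im ha.le] at h
  have e : ∀ r, Complex.exp (ψ * Complex.I) *
      (hankelF s (ray ψ a r) - s * hankelF (s + 1) (ray ψ a r))
      = Complex.exp (ψ * Complex.I) * hankelF s (ray ψ a r)
        - s * (Complex.exp (ψ * Complex.I) * hankelF (s + 1) (ray ψ a r)) := fun r => by ring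
  simp_rw [e] at h
  rw [integral_sub ((integrableOn_hankelF_ray h1 h2 ha s).const_mul _)
    (((integrableOn_hankelF_ray h1 h2 ha (s + 1)).const_mul _).const_mul _),
    integral_const_mul (s : ℂ), Complex.sub_im, Complex.im_ofReal_mul] at h
  unfold hankel
  linear_combination (1 / Real.pi) * h

/-! ### The Laplace transform of a power -/

lemma integrableOn_rpow_mul_exp {p b : ℝ} (hp : -1 < p) (hb : 0 < b) :
    IntegrableOn (fun t : ℝ => t ^ p * Real.exp (-b * t)) (Ioi 0) := by
  simpa using integrableOn_rpow_mul_exp_neg_mul_rpow (p := 1) hp one_pos hb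

lemma norm_rpow_mul_cexp {p t : ℝ} (ht : 0 ≤ t) (z : ℂ) :
    ‖((t ^ p : ℝ) : ℂ) * Complex.exp (-(z * t))‖ = t ^ p * Real.exp (-z.re * t) := by
  rw [norm_mul, Complex.norm_exp, Complex.norm_real, Real.norm_of_nonneg (by positivity)]
  simp

lemma continuousOn_rpow_mul_cexp (p : ℝ) (z : ℂ) :
    ContinuousOn (fun t : ℝ => ((t ^ p : ℝ) : ℂ) * Complex.exp (-(z * t))) (Ioi 0) := by
  refine ContinuousOn.mul ?_ (by fun_prop)
  refine Complex.continuous_ofReal.comp_continuousOn fun t ht => ?_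
  exact (Real.continuousAt_rpow_const t p (Or.inl (ne_of_gt ht))).continuousWithinAt

lemma integrableOn_rpow_mul_cexp {p : ℝ} {z : ℂ} (hp : -1 < p) (hz : 0 < z.re) :
    IntegrableOn (fun t : ℝ => ((t ^ p : ℝ) : ℂ) * Complex.exp (-(z * t))) (Ioi 0) := by
  refine (integrableOn_rpow_mul_exp hp hz).mono'
    ((continuousOn_rpow_mul_cexp p z).aestronglyMeasurable measurableSet_Ioi) ?_
  filter_upwards [ae_restrict_mem measurableSet_Ioi] with t ht
  exact (norm_rpow_mul_cexp (le_of_lt ht) z).le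

lemma differentiableAt_laplace_rpow {p : ℝ} {z : ℂ} (hp : 0 < p) (hz : 0 < z.re) :
    DifferentiableAt ℂ
      (fun z : ℂ => ∫ t in Ioi (0 : ℝ), ((t ^ (p - 1) : ℝ) : ℂ) * Complex.exp (-(z * t))) z := by
  have hs : {w : ℂ | z.re / 2 < w.re} ∈ 𝓝 z :=
    (isOpen_lt continuous_const Complex.continuous_re).mem_nhds (half_lt_self hz)
  refine (hasDerivAt_integral_of_dominated_loc_of_deriv_le
    (F' := fun w t => -(((t ^ p : ℝ) : ℂ) * Complex.exp (-(w * t))))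
    (bound := fun t => t ^ p * Real.exp (-(z.re / 2) * t)) hs
    (Eventually.of_forall fun w =>
      (continuousOn_rpow_mul_cexp _ w).aestronglyMeasurable measurableSet_Ioi)
    (integrableOn_rpow_mul_cexp (by linarith) hz)
    ((continuousOn_rpow_mul_cexp _ z).aestronglyMeasurable measurableSet_Ioi).neg
    ?_ (integrableOn_rpow_mul_exp (by linarith) (half_pos hz)) ?_).2.differentiableAt
  · filter_upwards [ae_restrict_mem measurableSet_Ioi] with t ht w hw
    have ht' : 0 < t := ht
    have hw' : z.re / 2 < w.re := hw
    rw [norm_neg, norm_rpow_mul_cexp ht'.le]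
    gcongr
  · filter_upwards [ae_restrict_mem measurableSet_Ioi] with t ht w hw
    have h := ((((hasDerivAt_id w).mul_const (t : ℂ)).neg).cexp).const_mul
      ((t ^ (p - 1) : ℝ) : ℂ)
    refine h.congr_deriv ?_
    have e : t ^ p = t ^ (p - 1) * t := by
      rw [Real.rpow_sub_one (ne_of_gt ht), div_mul_cancel₀ _ (ne_of_gt ht)]
    rw [e, Complex.ofReal_mul]
    simp only [id, Pi.neg_apply]
    ring

/-- The Laplace transform of `t^{p-1}` on the right half-plane. Both sides are holomorphic, and
they agree for positive real `z`. -/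
lemma laplace_rpow {p : ℝ} {z : ℂ} (hp : 0 < p) (hz : 0 < z.re) :
    ∫ t in Ioi (0 : ℝ), ((t ^ (p - 1) : ℝ) : ℂ) * Complex.exp (-(z * t))
      = z ^ (-(p : ℂ)) * (Real.Gamma p : ℂ) := by
  have hU : IsOpen {w : ℂ | 0 < w.re} := isOpen_lt continuous_const Complex.continuous_re
  have hf : AnalyticOnNhd ℂ (fun z : ℂ => ∫ t in Ioi (0 : ℝ),
      ((t ^ (p - 1) : ℝ) : ℂ) * Complex.exp (-(z * t))) {w : ℂ | 0 < w.re} :=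
    DifferentiableOn.analyticOnNhd
      (fun w hw => (differentiableAt_laplace_rpow hp hw).differentiableWithinAt) hU
  have hg : AnalyticOnNhd ℂ (fun z : ℂ => z ^ (-(p : ℂ)) * (Real.Gamma p : ℂ))
      {w : ℂ | 0 < w.re} := by
    refine DifferentiableOn.analyticOnNhd (fun w hw => ?_) hU
    exact (((hasDerivAt_id w).cpow_const (Or.inl hw)).mul_const _).differentiableAt
      |>.differentiableWithinAt
  have hreal : ∀ b : ℝ, 0 < b → (∫ t in Ioi (0 : ℝ),
      ((t ^ (p - 1) : ℝ) : ℂ) * Complex.exp (-((b : ℂ) * t)))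
        = (b : ℂ) ^ (-(p : ℂ)) * (Real.Gamma p : ℂ) := fun b hb => by
    have h := congrArg (fun x : ℝ => (x : ℂ)) (Real.integral_rpow_mul_exp_neg_mul_Ioi hp hb)
    rw [one_div, Real.inv_rpow hb.le, ← Real.rpow_neg hb.le, ← integral_complex_ofReal] at h
    push_cast at h
    rw [← Complex.ofReal_neg, ← Complex.ofReal_cpow hb.le, ← h]
  refine hf.eqOn_of_preconnected_of_frequently_eq hg
    ((convex_halfSpace_re_gt 0).isPreconnected) (z₀ := 1) (by simp) ?_ hz
  have ht : Tendsto (fun b : ℝ => (b : ℂ)) (𝓝[>] 1) (𝓝[≠] 1) := by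
    refine tendsto_nhdsWithin_of_tendsto_nhds_of_eventually_within _ ?_ ?_
    · exact (Complex.continuous_ofReal.tendsto' 1 1 (by simp)).mono_left nhdsWithin_le_nhds
    · filter_upwards [self_mem_nhdsWithin] with b hb
      simpa using ne_of_gt hb
  refine ht.frequently (Eventually.frequently ?_)
  filter_upwards [self_mem_nhdsWithin] with b hb
  exact hreal b (zero_lt_one.trans hb)

/-! ### Hankel's formula for the reciprocal Gamma function -/

lemma norm_hankelF_ray_le {m A : ℝ} (hs : 0 ≤ s) (hm : 0 < m) (hmr : m ≤ ‖ray ψ a r‖)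
    (hA : a ≤ A) :
    ‖hankelF s (ray ψ a r)‖ ≤ Real.exp A * Real.exp (-(-Real.cos ψ) * r) * m ^ (-s) := by
  rw [norm_hankelF, ray_re, ← Real.exp_add]
  have h1 : ‖ray ψ a r‖ ^ (-s) ≤ m ^ (-s) :=
    Real.rpow_le_rpow_of_nonpos hm hmr (neg_nonpos.2 hs)
  have h2 : a + r * Real.cos ψ ≤ A + -(-Real.cos ψ) * r := by linarith
  gcongr

lemma continuousOn_hankel_left (h1 : Real.pi / 2 < ψ) (h2 : ψ < Real.pi) (hs0 : 0 < s)
    (hs1 : s < 1) (A : ℝ) : ContinuousOn (fun a => hankel ψ a s) (Icc 0 A) := by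
  have hc : 0 < -Real.cos ψ := by
    linarith [Real.cos_neg_of_pi_div_two_lt_of_lt h1 (by linarith [Real.pi_pos])]
  have hsin : 0 < Real.sin ψ := Real.sin_pos_of_pos_of_lt_pi (by linarith [Real.pi_pos]) h2
  have hint : ContinuousOn (fun a => ∫ r in Ioi (0 : ℝ),
      Complex.exp (ψ * Complex.I) * hankelF s (ray ψ a r)) (Icc 0 A) := by
    refine continuousOn_of_dominated (bound := fun r =>
      Real.exp A * Real.sin ψ ^ (-s) * (r ^ (-s) * Real.exp (-(-Real.cos ψ) * r))) ?_ ?_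
      ((integrableOn_rpow_mul_exp (by linarith) hc).const_mul _) ?_
    · intro a ha
      refine ContinuousOn.aestronglyMeasurable (continuousOn_const.mul
        ((continuousOn_hankelF s).comp (continuous_ray ψ a).continuousOn ?_)) measurableSet_Ioi
      exact fun r hr => ray_mem_slitPlane h2 h1 ha.1 (le_of_lt hr) (Or.inr (ne_of_gt hr))
    · intro a ha
      filter_upwards [ae_restrict_mem measurableSet_Ioi] with r hr
      have hr' : 0 < r := hr
      rw [norm_mul, norm_dir, one_mul]
      refine (norm_hankelF_ray_le hs0.le (mul_pos hr' hsin) (mul_sin_le_norm_ray' ψ a r)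
        ha.2).trans_eq ?_
      rw [Real.mul_rpow hr'.le hsin.le]
      ring
    · filter_upwards [ae_restrict_mem measurableSet_Ioi] with r hr
      refine continuousOn_const.mul ((continuousOn_hankelF s).comp
        (fun a _ => (hasDerivAt_ray_left ψ a r).continuousAt.continuousWithinAt) ?_)
      exact fun a ha => ray_mem_slitPlane h2 h1 ha.1 (le_of_lt hr) (Or.inr (ne_of_gt hr))
  exact continuousOn_const.mul (Complex.continuous_im.comp_continuousOn hint)

/-- Moving the vertex of the contour along the positive real axis does not change `hankel`. -/
lemma hasDerivAt_hankel_left (h1 : Real.pi / 2 < ψ) (h2 : ψ < Real.pi) (hs0 : 0 < s)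
    (ha : 0 < a) : HasDerivAt (fun a => hankel ψ a s) 0 a := by
  have hc : 0 < -Real.cos ψ := by
    linarith [Real.cos_neg_of_pi_div_two_lt_of_lt h1 (by linarith [Real.pi_pos])]
  have hsin : 0 < Real.sin ψ := Real.sin_pos_of_pos_of_lt_pi (by linarith [Real.pi_pos]) h2
  have hm : 0 < a / 2 * Real.sin ψ := by positivity
  have hd := (hasDerivAt_integral_of_dominated_loc_of_deriv_le (μ := volume.restrict (Ioi 0))
    (F := fun a r => Complex.exp (ψ * Complex.I) * hankelF s (ray ψ a r))
    (F' := fun a r => Complex.exp (ψ * Complex.I) *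
      (hankelF s (ray ψ a r) - s * hankelF (s + 1) (ray ψ a r)))
    (bound := fun r => Real.exp (a + 1) * ((a / 2 * Real.sin ψ) ^ (-s) +
      s * (a / 2 * Real.sin ψ) ^ (-(s + 1))) * (r ^ (0 : ℝ) * Real.exp (-(-Real.cos ψ) * r)))
    (x₀ := a) (s := Ioo (a / 2) (a + 1)) (Ioo_mem_nhds (by linarith) (by linarith))
    ?_ ((integrableOn_hankelF_ray h1 h2 ha s).const_mul _)
    (((integrableOn_hankelF_ray h1 h2 ha s).sub
      ((integrableOn_hankelF_ray h1 h2 ha (s + 1)).const_mul _)).const_mul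
        _).aestronglyMeasurable ?_
    ((integrableOn_rpow_mul_exp (by norm_num) hc).const_mul _) ?_).2
  · rw [integral_deriv_hankelF h1 h2 ha s] at hd
    have h3 := (Complex.imCLM.hasFDerivAt.comp_hasDerivAt a hd).const_mul (1 / Real.pi)
    refine h3.congr_deriv ?_
    simp [hankelF_ofReal_im ha.le]
  · filter_upwards [lt_mem_nhds ha] with b hb
    exact ((integrableOn_hankelF_ray h1 h2 hb s).const_mul _).aestronglyMeasurable
  · filter_upwards [ae_restrict_mem measurableSet_Ioi] with r hr b hb
    have hmb : a / 2 * Real.sin ψ ≤ ‖ray ψ b r‖ :=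
      le_trans (by have := hb.1; gcongr) (mul_sin_le_norm_ray ψ b r)
    rw [norm_mul, norm_dir, one_mul, Real.rpow_zero, one_mul]
    refine (norm_sub_le _ _).trans ?_
    rw [norm_mul, Complex.norm_real, Real.norm_of_nonneg hs0.le]
    have e1 := norm_hankelF_ray_le (s := s) hs0.le hm hmb hb.2.le
    have e2 := mul_le_mul_of_nonneg_left
      (norm_hankelF_ray_le (s := s + 1) (by linarith) hm hmb hb.2.le) hs0.le
    refine (add_le_add e1 e2).trans_eq ?_
    ring
  · filter_upwards [ae_restrict_mem measurableSet_Ioi] with r hr b hb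
    have hb' : 0 < b := by linarith [hb.1]
    refine HasDerivAt.const_mul _ ?_
    have h3 := (hasDerivAt_hankelF s (ray_mem_slitPlane h2 h1 hb'.le (le_of_lt hr)
      (Or.inl hb'.ne'))).comp b (hasDerivAt_ray_left ψ b r)
    rw [mul_one] at h3
    exact h3

/-- Hankel's formula with vertex at the origin, for `s < 1`. There the integral along the ray
is a Laplace integral. By Euler's reflection formula, the right-hand side is `1 / Γ(s)` when
`0 < s < 1`. -/
lemma hankel_zero_left (h1 : Real.pi / 2 < ψ) (h2 : ψ < Real.pi) (hs1 : s < 1) :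
    hankel ψ 0 s = Real.sin (Real.pi * s) * Real.Gamma (1 - s) / Real.pi := by
  have hpi := Real.pi_pos
  set w := Complex.exp (ψ * Complex.I) with hw
  have hw0 : w ≠ 0 := Complex.exp_ne_zero _
  have hneg : -w = Complex.exp ((ψ - Real.pi : ℝ) * Complex.I) := by
    push_cast
    rw [sub_mul, Complex.exp_sub, Complex.exp_pi_mul_I, ← hw]
    ring
  have hre : 0 < (-w).re := by
    rw [Complex.neg_re, hw, Complex.exp_ofReal_mul_I_re]
    linarith [Real.cos_neg_of_pi_div_two_lt_of_lt h1 (by linarith [Real.pi_pos])]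
  have hlogw : Complex.log w = ψ * Complex.I := by
    rw [hw, Complex.log_exp] <;> simp <;> linarith
  have hlogn : Complex.log (-w) = (ψ - Real.pi : ℝ) * Complex.I := by
    rw [hneg, Complex.log_exp] <;> simp <;> linarith
  have hpt : ∀ r ∈ Ioi (0 : ℝ), w * hankelF s (ray ψ 0 r)
      = w * w ^ (-(s : ℂ)) * (((r ^ ((1 - s) - 1) : ℝ) : ℂ) * Complex.exp (-(-w * r))) := by
    intro r hr
    have hr' : 0 < r := hr
    have h3 : ray ψ 0 r = r * w := by simp [ray, hw]
    have h4 : ((r : ℂ) * w) ^ (-(s : ℂ)) = (r : ℂ) ^ (-(s : ℂ)) * w ^ (-(s : ℂ)) := by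
      rw [Complex.cpow_def_of_ne_zero (by simp [hr'.ne', hw0]),
        Complex.cpow_def_of_ne_zero (by simp [hr'.ne']), Complex.cpow_def_of_ne_zero hw0,
        Complex.log_ofReal_mul hr' hw0, ← Complex.exp_add, Complex.ofReal_log hr'.le]
      ring_nf
    rw [hankelF, h3, h4, show (1 - s) - 1 = -s by ring, Complex.ofReal_cpow hr'.le]
    push_cast
    rw [show -(-w * (r : ℂ)) = r * w by ring]
    ring
  rw [hankel, ← hw, setIntegral_congr_fun measurableSet_Ioi hpt, integral_const_mul,
    laplace_rpow (by linarith) hre]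
  have h5 : w * w ^ (-(s : ℂ)) * (-w) ^ (-((1 - s : ℝ) : ℂ))
      = Complex.exp ((Real.pi - Real.pi * s : ℝ) * Complex.I) := by
    rw [Complex.cpow_def_of_ne_zero hw0, Complex.cpow_def_of_ne_zero (neg_ne_zero.2 hw0),
      hlogw, hlogn, hw, ← Complex.exp_add, ← Complex.exp_add]
    push_cast
    ring_nf
  rw [← mul_assoc, h5, Complex.im_mul_ofReal, Complex.exp_ofReal_mul_I_im, Real.sin_pi_sub]
  ring

lemma hankel_eq_of_mem_Ioo (h1 : Real.pi / 2 < ψ) (h2 : ψ < Real.pi) (ha : 0 < a)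
    (hs0 : 0 < s) (hs1 : s < 1) : hankel ψ a s = (Real.Gamma s)⁻¹ := by
  obtain ⟨c, -, hc⟩ := exists_hasDerivAt_eq_slope (fun a => hankel ψ a s) (fun _ => 0) ha
    (continuousOn_hankel_left h1 h2 hs0 hs1 a)
    fun x hx => hasDerivAt_hankel_left h1 h2 hs0 hx.1
  have h3 : hankel ψ a s = hankel ψ 0 s := by
    rw [sub_zero, eq_comm, div_eq_zero_iff] at hc
    rcases hc with hc | hc
    · linarith
    · exact absurd hc ha.ne'
  have h4 := Real.Gamma_mul_Gamma_one_sub s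
  have hsin : Real.sin (Real.pi * s) ≠ 0 :=
    (Real.sin_pos_of_pos_of_lt_pi (by have := Real.pi_pos; positivity)
      (by nlinarith [Real.pi_pos])).ne'
  have hG := (Real.Gamma_pos_of_pos hs0).ne'
  rw [eq_div_iff hsin] at h4
  rw [h3, hankel_zero_left h1 h2 hs1, div_eq_iff Real.pi_ne_zero, eq_inv_mul_iff_mul_eq₀ hG]
  linarith

lemma continuous_inv_Gamma : Continuous fun s : ℝ => (Real.Gamma s)⁻¹ := by
  have h := Complex.continuous_re.comp
    (Complex.differentiable_one_div_Gamma.continuous.comp Complex.continuous_ofReal)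
  refine h.congr fun s => ?_
  simp only [Function.comp, Complex.Gamma_ofReal, ← Complex.ofReal_inv, Complex.ofReal_re]

lemma continuousOn_hankel_right (h1 : Real.pi / 2 < ψ) (h2 : ψ < Real.pi) (ha : 0 < a) :
    ContinuousOn (fun s => hankel ψ a s) (Icc 0 1) := by
  have hsin : 0 < Real.sin ψ := Real.sin_pos_of_pos_of_lt_pi (by linarith [Real.pi_pos]) h2
  have hint : ContinuousOn (fun s => ∫ r in Ioi (0 : ℝ),
      Complex.exp (ψ * Complex.I) * hankelF s (ray ψ a r)) (Icc 0 1) := by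
    refine continuousOn_of_dominated (bound := fun r =>
      ‖hankelF 0 (ray ψ a r)‖ + ‖hankelF 1 (ray ψ a r)‖) ?_ ?_
      ((integrableOn_hankelF_ray h1 h2 ha 0).norm.add
        (integrableOn_hankelF_ray h1 h2 ha 1).norm) ?_
    · exact fun s _ => ((integrableOn_hankelF_ray h1 h2 ha s).const_mul _).aestronglyMeasurable
    · intro s hs
      filter_upwards [ae_restrict_mem measurableSet_Ioi] with r hr
      have hz : 0 < ‖ray ψ a r‖ := norm_pos_iff.2 (Complex.slitPlane_ne_zero
        (ray_mem_slitPlane h2 h1 ha.le (le_of_lt hr) (Or.inl ha.ne')))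
      rw [norm_mul, norm_dir, one_mul, norm_hankelF, norm_hankelF, norm_hankelF, ← mul_add]
      gcongr
      rcases le_total 1 ‖ray ψ a r‖ with h | h
      · exact (Real.rpow_le_rpow_of_exponent_le h (by linarith [hs.1])).trans
          (le_add_of_nonneg_right (by positivity))
      · exact (Real.rpow_le_rpow_of_exponent_ge hz h (by linarith [hs.2])).trans
          (le_add_of_nonneg_left (by positivity))
    · filter_upwards [ae_restrict_mem measurableSet_Ioi] with r hr
      have hz : ray ψ a r ≠ 0 := Complex.slitPlane_ne_zero
        (ray_mem_slitPlane h2 h1 ha.le (le_of_lt hr) (Or.inl ha.ne'))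
      refine Continuous.continuousOn ?_
      unfold hankelF
      simp only [Complex.cpow_def_of_ne_zero hz]
      fun_prop
  exact continuousOn_const.mul (Complex.continuous_im.comp_continuousOn hint)

lemma inv_Gamma_eq_mul (s : ℝ) : (Real.Gamma s)⁻¹ = s * (Real.Gamma (s + 1))⁻¹ := by
  rcases eq_or_ne s 0 with rfl | hs
  · simp [Real.Gamma_zero]
  · rw [Real.Gamma_add_one hs, mul_inv, mul_inv_cancel_left₀ hs]

/-- Hankel's formula for the reciprocal Gamma function. -/
lemma hankel_eq (h1 : Real.pi / 2 < ψ) (h2 : ψ < Real.pi) (ha : 0 < a) (s : ℝ) :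
    hankel ψ a s = (Real.Gamma s)⁻¹ := by
  have hbase : ∀ s ∈ Icc (0 : ℝ) 1, hankel ψ a s = (Real.Gamma s)⁻¹ := by
    have h3 : EqOn (fun s => hankel ψ a s) (fun s => (Real.Gamma s)⁻¹) (Ioo 0 1) :=
      fun s hs => hankel_eq_of_mem_Ioo h1 h2 ha hs.1 hs.2
    refine h3.of_subset_closure (continuousOn_hankel_right h1 h2 ha)
      continuous_inv_Gamma.continuousOn Ioo_subset_Icc_self ?_
    rw [closure_Ioo zero_ne_one]
  have hup : ∀ n : ℕ, ∀ s ∈ Ioc (0 : ℝ) (n + 1), hankel ψ a s = (Real.Gamma s)⁻¹ := by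
    intro n
    induction n with
    | zero => exact fun s hs => hbase s ⟨hs.1.le, by simpa using hs.2⟩
    | succ n ih =>
      intro s hs
      push_cast at hs
      rcases le_or_gt s 1 with h | h
      · exact hbase s ⟨hs.1.le, h⟩
      · have h4 := ih (s - 1) ⟨by linarith, by linarith [hs.2]⟩
        rw [hankel_eq_mul_hankel_add_one h1 h2 ha, inv_Gamma_eq_mul, sub_add_cancel] at h4
        exact mul_left_cancel₀ (by linarith) h4
  have hpos : ∀ s, 0 < s → hankel ψ a s = (Real.Gamma s)⁻¹ := fun s hs => by
    obtain ⟨n, hn⟩ := exists_nat_ge s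
    exact hup n s ⟨hs, by linarith⟩
  have hdown : ∀ n : ℕ, ∀ s : ℝ, -n < s → hankel ψ a s = (Real.Gamma s)⁻¹ := by
    intro n
    induction n with
    | zero => exact fun s hs => hpos s (by simpa using hs)
    | succ n ih =>
      intro s hs
      push_cast at hs
      rw [hankel_eq_mul_hankel_add_one h1 h2 ha, inv_Gamma_eq_mul, ih (s + 1) (by linarith)]
  obtain ⟨n, hn⟩ := exists_nat_gt (-s)
  exact hdown n s (by linarith)

/-! ### Contour integral, decay and moments of the Wright function -/

variable {α x p : ℝ}

/-- The integrand of the contour integral `(2πi)⁻¹ ∫ e^z z^{α-1} e^{-x z^α} dz`, which represents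
the function `x ↦ W_{-α,1-α}(-x)`, parametrized along the ray. -/
noncomputable def kernel (α ψ a x r : ℝ) : ℂ :=
  Complex.exp (ψ * Complex.I) *
    (hankelF (1 - α) (ray ψ a r) * Complex.exp (-(x * ray ψ a r ^ (α : ℂ))))

lemma continuousOn_ray_cpow (h1 : Real.pi / 2 < ψ) (h2 : ψ < Real.pi) (ha : 0 < a) (α : ℝ) :
    ContinuousOn (fun r => ray ψ a r ^ (α : ℂ)) (Ici 0) := fun _ hr =>
  (ContinuousAt.comp (f := fun r => ray ψ a r) (g := fun z : ℂ => z ^ (α : ℂ))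
    (continuousAt_cpow_const (ray_mem_slitPlane h2 h1 ha.le hr (Or.inl ha.ne')))
    (continuous_ray ψ a).continuousAt).continuousWithinAt

/-- The growth of `exp (x |z|^α)` is dominated by the decay of `e^z` along the ray, as `α < 1`. -/
lemma integrableOn_norm_hankelF_mul_exp (h1 : Real.pi / 2 < ψ) (h2 : ψ < Real.pi) (ha : 0 < a)
    (hα0 : 0 < α) (hα1 : α < 1) (hx : 0 ≤ x) (s : ℝ) :
    IntegrableOn (fun r => ‖hankelF s (ray ψ a r)‖ * Real.exp (x * ‖ray ψ a r‖ ^ α))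
      (Ioi 0) := by
  have hc : 0 < -Real.cos ψ := by
    linarith [Real.cos_neg_of_pi_div_two_lt_of_lt h1 (by linarith [Real.pi_pos])]
  have hb : 0 < -Real.cos ψ / 4 := by positivity
  refine integrable_of_isBigO_exp_neg hb ?_ ?_
  · refine (continuousOn_hankelF_ray h1 h2 ha s).norm.mul (Continuous.continuousOn ?_)
    have := (continuous_ray ψ a).norm.rpow_const (p := α) (fun _ => Or.inr hα0.le)
    fun_prop
  · have hO : (fun r => Real.exp (x * ‖ray ψ a r‖ ^ α)) =O[atTop]
        fun r => Real.exp (-Real.cos ψ / 4 * r) := by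
      have hlo : (fun r : ℝ => x * (a + r) ^ α) =o[atTop] fun r => r := by
        have h3 : (fun r : ℝ => r ^ α) =o[atTop] fun r : ℝ => r := by
          refine Asymptotics.isLittleO_of_tendsto' ?_ ?_
          · filter_upwards [eventually_gt_atTop 0] with r hr h0 using absurd h0 hr.ne'
          · refine (tendsto_rpow_neg_atTop (sub_pos.2 hα1)).congr' ?_
            filter_upwards [eventually_gt_atTop 0] with r hr
            rw [neg_sub, Real.rpow_sub_one hr.ne']
        have h4 := h3.comp_tendsto (tendsto_atTop_add_const_left atTop a tendsto_id)
        have h5 : ((fun r : ℝ => r) ∘ fun r => a + id r) =O[atTop] fun r : ℝ => r := by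
          refine Asymptotics.IsBigO.add ?_ (Asymptotics.isBigO_refl _ _)
          exact (Asymptotics.isLittleO_const_id_atTop a).isBigO
        exact (h4.trans_isBigO h5).const_mul_left x
      refine Asymptotics.IsBigO.of_bound 1 ?_
      filter_upwards [hlo.bound hb, eventually_ge_atTop 0] with r hr hr0
      rw [Real.norm_of_nonneg (by positivity), Real.norm_of_nonneg hr0] at hr
      rw [Real.norm_of_nonneg (by positivity), Real.norm_of_nonneg (by positivity), one_mul]
      refine Real.exp_le_exp.2 (le_trans ?_ hr)
      have := Real.rpow_le_rpow (norm_nonneg _) (norm_ray_le ψ ha.le hr0) hα0.le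
      gcongr
    refine ((hankelF_ray_isBigO h1 h2 ha s).norm_left.mul hO).congr_right fun r => ?_
    rw [← Real.exp_add]
    ring_nf

/-- Termwise application of Hankel's formula to the Wright series. -/
lemma wrightW_neg (h1 : Real.pi / 2 < ψ) (h2 : ψ < Real.pi) (ha : 0 < a)
    (hα0 : 0 < α) (hα1 : α < 1) (hx : 0 ≤ x) :
    wrightW α (-x) = 1 / Real.pi * (∫ r in Ioi (0 : ℝ), kernel α ψ a x r).im := by
  have hterm : ∀ (n : ℕ), ∀ r ∈ Ioi (0 : ℝ),
      Complex.exp (ψ * Complex.I) * (hankelF (1 - α) (ray ψ a r) *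
        ((-(x * ray ψ a r ^ (α : ℂ))) ^ n / (n.factorial : ℂ)))
      = (((-x) ^ n / n.factorial : ℝ) : ℂ) *
        (Complex.exp (ψ * Complex.I) * hankelF (1 - α * (n + 1)) (ray ψ a r)) := by
    intro n r hr
    have hz := Complex.slitPlane_ne_zero
      (ray_mem_slitPlane h2 h1 ha.le (le_of_lt hr) (Or.inl ha.ne'))
    have h3 : ray ψ a r ^ (-((1 - α * (n + 1) : ℝ) : ℂ))
        = ray ψ a r ^ (-((1 - α : ℝ) : ℂ)) * (ray ψ a r ^ (α : ℂ)) ^ n := by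
      rw [← Complex.cpow_nat_mul, ← Complex.cpow_add _ _ hz]
      push_cast
      ring_nf
    rw [hankelF, hankelF, h3, ← neg_mul, mul_pow]
    push_cast
    ring
  have hsum : HasSum (fun n : ℕ => ∫ r in Ioi (0 : ℝ), (((-x) ^ n / n.factorial : ℝ) : ℂ) *
        (Complex.exp (ψ * Complex.I) * hankelF (1 - α * (n + 1)) (ray ψ a r)))
      (∫ r in Ioi (0 : ℝ), kernel α ψ a x r) := by
    refine hasSum_integral_of_dominated_convergence (fun n r =>
      ‖hankelF (1 - α) (ray ψ a r)‖ * ((x * ‖ray ψ a r‖ ^ α) ^ n / n.factorial)) ?_ ?_ ?_ ?_ ?_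
    · exact fun n => (((integrableOn_hankelF_ray h1 h2 ha _).const_mul _).const_mul
        _).aestronglyMeasurable
    · intro n
      filter_upwards [ae_restrict_mem measurableSet_Ioi] with r hr
      rw [← hterm n r hr, norm_mul, norm_dir, one_mul, norm_mul, norm_div, norm_pow, norm_neg,
        norm_mul, Complex.norm_cpow_real, Complex.norm_real, Real.norm_of_nonneg hx]
      simp
    · exact Eventually.of_forall fun r => (Real.summable_pow_div_factorial _).mul_left _
    · refine (integrableOn_norm_hankelF_mul_exp h1 h2 ha hα0 hα1 hx (1 - α)).congr
        (Eventually.of_forall fun r => ?_)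
      simp only
      rw [tsum_mul_left, Real.exp_eq_exp_ℝ, NormedSpace.exp_eq_tsum_div]
    · filter_upwards [ae_restrict_mem measurableSet_Ioi] with r hr
      simp_rw [← hterm _ r hr]
      refine HasSum.mul_left _ (HasSum.mul_left _ ?_)
      rw [Complex.exp_eq_exp_ℂ]
      exact NormedSpace.expSeries_div_hasSum_exp _
  have h4 := (Complex.hasSum_im hsum).mul_left (1 / Real.pi)
  rw [wrightW, ← h4.tsum_eq]
  refine tsum_congr fun n => ?_
  have h5 := hankel_eq h1 h2 ha (1 - α * (n + 1))
  rw [hankel] at h5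
  rw [integral_const_mul, Complex.im_ofReal_mul, mul_left_comm, h5]
  rw [div_mul_eq_div_div, div_eq_mul_inv (_ / _)]

/-- Along the ray, `Re z^α` is bounded below by a positive constant that becomes arbitrarily large
with `a`. This yields the decay of the Wright function. -/
lemma le_re_ray_cpow (h1 : Real.pi / 2 < ψ) (h2 : ψ < Real.pi) (ha : 0 < a)
    (hα0 : 0 < α) (hαψ : α * ψ < Real.pi / 2) {r : ℝ} (hr : 0 ≤ r) :
    Real.cos (α * ψ) * (a * Real.sin ψ) ^ α ≤ (ray ψ a r ^ (α : ℂ)).re := by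
  have hpi := Real.pi_pos
  have hsin : 0 < Real.sin ψ := Real.sin_pos_of_pos_of_lt_pi (by linarith) h2
  have hψ : 0 < ψ := by linarith
  have hcos : 0 < Real.cos (α * ψ) :=
    Real.cos_pos_of_mem_Ioo ⟨by nlinarith [mul_pos hα0 hψ], hαψ⟩
  obtain ⟨harg0, harg⟩ := arg_ray h1 h2 ha hr
  rw [Complex.cpow_ofReal_re, mul_comm]
  have h3 : Real.cos (α * ψ) ≤ Real.cos ((ray ψ a r).arg * α) :=
    Real.cos_le_cos_of_nonneg_of_le_pi (by positivity) (by linarith)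
      (by rw [mul_comm]; gcongr)
  have h4 := Real.rpow_le_rpow (by positivity) (mul_sin_le_norm_ray ψ a r) hα0.le
  gcongr

section Moments

variable {κ : ℝ}

lemma norm_kernel_le (hx : 0 ≤ x) {r : ℝ} (hκ : κ ≤ (ray ψ a r ^ (α : ℂ)).re) :
    ‖kernel α ψ a x r‖ ≤ Real.exp (-κ * x) * ‖hankelF (1 - α) (ray ψ a r)‖ := by
  rw [kernel, norm_mul, norm_dir, one_mul, norm_mul, Complex.norm_exp, Complex.neg_re,
    Complex.re_ofReal_mul, mul_comm]
  have : -(x * (ray ψ a r ^ (α : ℂ)).re) ≤ -κ * x := by nlinarith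
  gcongr

lemma integrable_moment_prod (h1 : Real.pi / 2 < ψ) (h2 : ψ < Real.pi) (ha : 0 < a)
    (hκ0 : 0 < κ) (hκ : ∀ r, 0 ≤ r → κ ≤ (ray ψ a r ^ (α : ℂ)).re) (hp : -1 < p) :
    Integrable (Function.uncurry fun x r => ((x ^ p : ℝ) : ℂ) * kernel α ψ a x r)
      ((volume.restrict (Ioi 0)).prod (volume.restrict (Ioi 0))) := by
  have hdom := (integrableOn_rpow_mul_exp hp hκ0).mul_prod
    (integrableOn_hankelF_ray h1 h2 ha (1 - α)).norm
  refine hdom.mono' ?_ ?_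
  · rw [Measure.prod_restrict]
    refine ContinuousOn.aestronglyMeasurable ?_ (measurableSet_Ioi.prod measurableSet_Ioi)
    have hm1 : MapsTo Prod.fst (Ioi (0 : ℝ) ×ˢ Ioi (0 : ℝ)) (Ioi 0) := fun q hq => hq.1
    have hm2 : MapsTo Prod.snd (Ioi (0 : ℝ) ×ˢ Ioi (0 : ℝ)) (Ici 0) :=
      fun q hq => Ioi_subset_Ici_self hq.2
    have c1 : ContinuousOn (fun q : ℝ × ℝ => ((q.1 ^ p : ℝ) : ℂ)) (Ioi 0 ×ˢ Ioi 0) :=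
      Complex.continuous_ofReal.comp_continuousOn
        (continuous_fst.continuousOn.rpow_const fun q hq => Or.inl (ne_of_gt hq.1))
    have c2 := (continuousOn_hankelF_ray h1 h2 ha (1 - α)).comp continuous_snd.continuousOn hm2
    have c3 := (continuousOn_ray_cpow h1 h2 ha α).comp continuous_snd.continuousOn hm2
    have c4 : ContinuousOn (fun q : ℝ × ℝ => (q.1 : ℂ)) (Ioi 0 ×ˢ Ioi 0) := by fun_prop
    exact c1.mul (continuousOn_const.mul (c2.mul (c4.mul c3).neg.cexp))
  · rw [Measure.prod_restrict]
    filter_upwards [ae_restrict_mem (measurableSet_Ioi.prod measurableSet_Ioi)] with q hq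
    have hq1 : 0 < q.1 := hq.1
    have hq2 : 0 < q.2 := hq.2
    simp only [Function.uncurry]
    rw [norm_mul, Complex.norm_real, Real.norm_of_nonneg (by positivity), mul_assoc]
    have := norm_kernel_le hq1.le (hκ q.2 hq2.le)
    gcongr

lemma integral_rpow_mul_kernel (h1 : Real.pi / 2 < ψ) (h2 : ψ < Real.pi) (ha : 0 < a)
    (hα0 : 0 < α) (hα1 : α < 1) (hκ0 : 0 < κ)
    (hκ : ∀ r, 0 ≤ r → κ ≤ (ray ψ a r ^ (α : ℂ)).re) (hp : -1 < p) {r : ℝ} (hr : 0 ≤ r) :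
    ∫ x in Ioi (0 : ℝ), ((x ^ p : ℝ) : ℂ) * kernel α ψ a x r
      = (Real.Gamma (p + 1) : ℂ) *
        (Complex.exp (ψ * Complex.I) * hankelF (α * p + 1) (ray ψ a r)) := by
  have hz := Complex.slitPlane_ne_zero
    (ray_mem_slitPlane h2 h1 ha.le hr (Or.inl ha.ne'))
  have hlap := laplace_rpow (p := p + 1) (by linarith) (hκ0.trans_le (hκ r hr))
  obtain ⟨harg0, harg⟩ := arg_ray h1 h2 ha hr
  have him : (Complex.log (ray ψ a r) * α).im = (ray ψ a r).arg * α := by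
    rw [Complex.im_mul_ofReal, Complex.log_im]
  have e : (ray ψ a r ^ (α : ℂ)) ^ (-((p + 1 : ℝ) : ℂ))
      = ray ψ a r ^ ((α : ℂ) * (-((p + 1 : ℝ) : ℂ))) := by
    rw [Complex.cpow_mul]
    · rw [him]; nlinarith [Real.pi_pos]
    · rw [him]; nlinarith [Real.pi_pos]
  have e2 : hankelF (1 - α) (ray ψ a r) * ray ψ a r ^ ((α : ℂ) * (-((p + 1 : ℝ) : ℂ)))
      = hankelF (α * p + 1) (ray ψ a r) := by
    rw [hankelF, hankelF, mul_assoc, ← Complex.cpow_add _ _ hz]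
    push_cast
    ring_nf
  rw [e, add_sub_cancel_right] at hlap
  have e3 : ∀ x : ℝ, ((x ^ p : ℝ) : ℂ) * kernel α ψ a x r
      = Complex.exp (ψ * Complex.I) * hankelF (1 - α) (ray ψ a r) *
        (((x ^ p : ℝ) : ℂ) * Complex.exp (-(ray ψ a r ^ (α : ℂ) * x))) := fun x => by
    rw [kernel, mul_comm (x : ℂ)]; ring
  simp_rw [e3]
  rw [integral_const_mul, hlap, ← e2]
  ring

lemma rpow_mul_wrightW_eq (h1 : Real.pi / 2 < ψ) (h2 : ψ < Real.pi) (ha : 0 < a)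
    (hα0 : 0 < α) (hα1 : α < 1) (p : ℝ) (hx : 0 ≤ x) :
    x ^ p * wrightW α (-x) = 1 / Real.pi *
      Complex.imCLM (∫ r in Ioi (0 : ℝ), ((x ^ p : ℝ) : ℂ) * kernel α ψ a x r) := by
  rw [wrightW_neg h1 h2 ha hα0 hα1 hx, integral_const_mul, Complex.imCLM_apply,
    Complex.im_ofReal_mul]
  ring

/-- Moments of `x ↦ W_{-α,1-α}(-x)`. The bound on the absolute moments expresses decay at the
exponential rate `κ`, which is arbitrary; the constant `C` depends on `κ` but not on `p`. -/
lemma exists_moment_bound (hα0 : 0 < α) (hα1 : α < 1) (hκ0 : 0 < κ) :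
    ∃ C, ∀ p : ℝ, -1 < p →
      IntegrableOn (fun x => x ^ p * wrightW α (-x)) (Ioi 0) ∧
      ∫ x in Ioi (0 : ℝ), x ^ p * wrightW α (-x)
        = Real.Gamma (p + 1) / Real.Gamma (α * p + 1) ∧
      ∫ x in Ioi (0 : ℝ), ‖x ^ p * wrightW α (-x)‖
        ≤ C * (Real.Gamma (p + 1) * (1 / κ) ^ (p + 1)) := by
  have hpi := Real.pi_pos
  -- an angle with `π / 2 < ψ < π` and `α ψ < π / 2`
  obtain ⟨ψ, h1, h2, hαψ⟩ : ∃ ψ, Real.pi / 2 < ψ ∧ ψ < Real.pi ∧ α * ψ < Real.pi / 2 := by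
    refine ⟨Real.pi / (1 + α), ?_, ?_, ?_⟩
    · gcongr; linarith
    · exact div_lt_self hpi (by linarith)
    · rw [mul_div_assoc', div_lt_div_iff₀ (by linarith) two_pos]
      nlinarith
  have hsin : 0 < Real.sin ψ := Real.sin_pos_of_pos_of_lt_pi (by linarith) h2
  have hψ : 0 < ψ := by linarith
  have hcos : 0 < Real.cos (α * ψ) :=
    Real.cos_pos_of_mem_Ioo ⟨by nlinarith [mul_pos hα0 hψ], hαψ⟩
  -- the vertex for which the lower bound of `le_re_ray_cpow` equals `κ`
  obtain ⟨a, ha, hκ⟩ : ∃ a, 0 < a ∧ ∀ r, 0 ≤ r → κ ≤ (ray ψ a r ^ (α : ℂ)).re := by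
    have ha : 0 < (κ / Real.cos (α * ψ)) ^ (1 / α) / Real.sin ψ := by positivity
    refine ⟨_, ha, fun r hr => le_trans (le_of_eq ?_) (le_re_ray_cpow h1 h2 ha hα0 hαψ hr)⟩
    rw [div_mul_cancel₀ _ hsin.ne', ← Real.rpow_mul (by positivity), one_div_mul_cancel hα0.ne',
      Real.rpow_one, mul_div_cancel₀ _ hcos.ne']
  set B := ∫ r in Ioi (0 : ℝ), ‖hankelF (1 - α) (ray ψ a r)‖ with hB
  refine ⟨1 / Real.pi * B, fun p hp => ?_⟩
  have hprod := integrable_moment_prod (α := α) h1 h2 ha hκ0 hκ hp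
  have hin : IntegrableOn (fun x => 1 / Real.pi * Complex.imCLM (∫ r in Ioi (0 : ℝ),
      ((x ^ p : ℝ) : ℂ) * kernel α ψ a x r)) (Ioi 0) :=
    (Complex.imCLM.integrable_comp hprod.integral_prod_left).const_mul _
  have heq : ∀ x ∈ Ioi (0 : ℝ), x ^ p * wrightW α (-x) = 1 / Real.pi *
      Complex.imCLM (∫ r in Ioi (0 : ℝ), ((x ^ p : ℝ) : ℂ) * kernel α ψ a x r) :=
    fun x hx => rpow_mul_wrightW_eq h1 h2 ha hα0 hα1 p (le_of_lt hx)
  have hint : IntegrableOn (fun x => x ^ p * wrightW α (-x)) (Ioi 0) :=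
    (integrableOn_congr_fun heq measurableSet_Ioi).2 hin
  refine ⟨hint, ?_, ?_⟩
  · have hcomm := Complex.imCLM.integral_comp_comm hprod.integral_prod_left
    simp only [Function.uncurry] at hcomm
    rw [setIntegral_congr_fun measurableSet_Ioi heq, integral_const_mul,
      hcomm]
    have hswap := integral_integral_swap hprod
    rw [hswap, setIntegral_congr_fun measurableSet_Ioi fun r hr =>
      integral_rpow_mul_kernel h1 h2 ha hα0 hα1 hκ0 hκ hp (le_of_lt hr), integral_const_mul,
      Complex.imCLM_apply, Complex.im_ofReal_mul, mul_left_comm]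
    have h3 := hankel_eq h1 h2 ha (α * p + 1)
    rw [hankel] at h3
    rw [h3, div_eq_mul_inv]
  · have hG := Real.integral_rpow_mul_exp_neg_mul_Ioi (a := p + 1) (by linarith) hκ0
    have hdom : IntegrableOn (fun x => 1 / Real.pi * B * (x ^ p * Real.exp (-κ * x))) (Ioi 0) :=
      (integrableOn_rpow_mul_exp hp hκ0).const_mul _
    refine (setIntegral_mono_on hint.norm hdom measurableSet_Ioi fun x hx => ?_).trans_eq ?_
    · have hx' : 0 < x := hx
      have hk : ‖∫ r in Ioi (0 : ℝ), kernel α ψ a x r‖ ≤ Real.exp (-κ * x) * B := by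
        rw [hB, ← integral_const_mul]
        refine norm_integral_le_of_norm_le
          ((integrableOn_hankelF_ray h1 h2 ha (1 - α)).norm.const_mul _) ?_
        filter_upwards [ae_restrict_mem measurableSet_Ioi] with r hr
        exact norm_kernel_le hx'.le (hκ r (le_of_lt hr))
      rw [norm_mul, Real.norm_of_nonneg (by positivity), wrightW_neg h1 h2 ha hα0 hα1 hx'.le,
        norm_mul, Real.norm_of_nonneg (by positivity)]
      have h3 := (Complex.abs_im_le_norm (∫ r in Ioi (0 : ℝ), kernel α ψ a x r)).trans hk
      rw [← Real.norm_eq_abs] at h3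
      calc _ ≤ x ^ p * (1 / Real.pi * (Real.exp (-κ * x) * B)) := by gcongr
        _ = _ := by ring
    · rw [integral_const_mul, mul_comm (Real.Gamma _), ← hG]
      simp [neg_mul]

end Moments

/-! ### The subordination identity -/

/-- The subordination identity for `t = 1`. -/
lemma integral_mittagLeffler_mul_wrightW {ν c : ℝ} (hν : 0 < ν) (hα0 : 0 < α) (hα1 : α < 1)
    (hc : 0 < c) :
    ∫ x in Ioi (0 : ℝ), mittagLeffler ν 1 (-c * x ^ ν) * wrightW α (-x)
      = mittagLeffler (ν * α) 1 (-c) := by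
  -- with this rate, the majorant of the exchanged series is geometric with ratio `1 / 2`
  have hκ0 : 0 < (2 * c) ^ (1 / ν) := by positivity
  obtain ⟨C, hC⟩ := exists_moment_bound hα0 hα1 hκ0
  set κ := (2 * c) ^ (1 / ν) with hκ
  have hκν : κ ^ ν = 2 * c := by
    rw [hκ, ← Real.rpow_mul (by positivity), one_div_mul_cancel hν.ne', Real.rpow_one]
  have hp : ∀ h : ℕ, -1 < ν * h := fun h => by
    have : 0 ≤ ν * h := by positivity
    linarith
  have hG : ∀ h : ℕ, 0 < Real.Gamma (ν * h + 1) := fun h =>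
    Real.Gamma_pos_of_pos (by positivity)
  have hterm : ∀ h : ℕ, ∀ x ∈ Ioi (0 : ℝ),
      (-c * x ^ ν) ^ h / Real.Gamma (ν * h + 1) * wrightW α (-x)
        = (-c) ^ h / Real.Gamma (ν * h + 1) * (x ^ (ν * h) * wrightW α (-x)) := by
    intro h x hx
    rw [mul_pow, Real.rpow_mul_natCast (le_of_lt hx)]
    ring
  have hsum := hasSum_integral_of_summable_integral_norm (μ := volume.restrict (Ioi 0))
    (F := fun (h : ℕ) x => (-c) ^ h / Real.Gamma (ν * h + 1) * (x ^ (ν * h) * wrightW α (-x)))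
    (fun h => (hC _ (hp h)).1.const_mul _) ?_
  · calc _ = ∫ x in Ioi (0 : ℝ), ∑' h : ℕ,
          (-c) ^ h / Real.Gamma (ν * h + 1) * (x ^ (ν * h) * wrightW α (-x)) := by
          refine setIntegral_congr_fun measurableSet_Ioi fun x hx => ?_
          simp only [mittagLeffler]
          rw [← tsum_mul_right]
          exact tsum_congr fun h => hterm h x hx
      _ = ∑' h : ℕ, ∫ x in Ioi (0 : ℝ),
          (-c) ^ h / Real.Gamma (ν * h + 1) * (x ^ (ν * h) * wrightW α (-x)) :=
          hsum.tsum_eq.symm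
      _ = _ := by
          refine tsum_congr fun h => ?_
          rw [integral_const_mul, (hC _ (hp h)).2.1, div_mul_div_cancel₀ (hG h).ne']
          congr 3
          ring
  · refine Summable.of_nonneg_of_le (fun h => integral_nonneg fun x => norm_nonneg _)
      (fun h => ?_) ((summable_geometric_two).mul_left (C / κ))
    have hle := (hC _ (hp h)).2.2
    simp_rw [norm_mul ((-c) ^ h / Real.Gamma (ν * h + 1))]
    rw [integral_const_mul, norm_div, norm_pow, norm_neg, Real.norm_of_nonneg hc.le,
      Real.norm_of_nonneg (hG h).le]
    refine (mul_le_mul_of_nonneg_left hle (by have := hG h; positivity)).trans_eq ?_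
    have e : (1 / κ) ^ (ν * h + 1) = (1 / (2 * c)) ^ h * (1 / κ) := by
      rw [Real.rpow_add_one (by positivity), Real.rpow_mul_natCast (by positivity),
        one_div, Real.inv_rpow hκ0.le, hκν, one_div]
    have := (hG h).ne'
    rw [e, div_pow, div_pow, mul_pow, one_pow]
    field_simp

end WrightSubordination

/-- Subordination identity behind `N^ν(T_{2α}(t)) = N^{να}(t)`:
`∫_0^∞ E_{ν,1}(−λ s^ν) t^{−α} W_{−α,1−α}(−s t^{−α}) ds = E_{να,1}(−λ t^{να})`. -/
theorem mittagLeffler_wright_subordination (ν α lam t : ℝ) (hν0 : 0 < ν) (hν1 : ν ≤ 1)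
    (hα0 : 0 < α) (hα1 : α < 1) (hlam : 0 < lam) (ht : 0 < t) :
    ∫ s in Set.Ioi (0 : ℝ),
        mittagLeffler ν 1 (-lam * s ^ ν) * (t ^ (-α) * wrightW α (-s * t ^ (-α)))
      = mittagLeffler (ν * α) 1 (-lam * t ^ (ν * α)) := by
  have hu : 0 < t ^ (-α) := by positivity
  have hmain := WrightSubordination.integral_mittagLeffler_mul_wrightW (c := lam * t ^ (ν * α))
    hν0 hα0 hα1 (by positivity)
  -- the substitution `x = s t^{-α}`
  have hsub := integral_comp_mul_left_Ioi
    (fun x => mittagLeffler ν 1 (-(lam * t ^ (ν * α)) * x ^ ν) * wrightW α (-x)) 0 hu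
  rw [mul_zero, hmain] at hsub
  calc _ = ∫ s in Set.Ioi (0 : ℝ), t ^ (-α) *
        (mittagLeffler ν 1 (-(lam * t ^ (ν * α)) * (t ^ (-α) * s) ^ ν) *
          wrightW α (-(t ^ (-α) * s))) := by
        refine setIntegral_congr_fun measurableSet_Ioi fun s hs => ?_
        have e : -(lam * t ^ (ν * α)) * (t ^ (-α) * s) ^ ν = -lam * s ^ ν := by
          rw [Real.mul_rpow hu.le (le_of_lt hs), ← Real.rpow_mul ht.le, neg_mul, neg_mul,
            mul_assoc, ← mul_assoc (t ^ (ν * α)), ← Real.rpow_add ht]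
          simp [mul_comm α]
        rw [e, neg_mul s, mul_comm s]
        ring
    _ = _ := by
        rw [integral_const_mul, hsub, smul_eq_mul, mul_inv_cancel_left₀ hu.ne', neg_mul]
end

section
/- Let 0 < ν < 1, 0 < α ≤ 1, λ > 0 and t > 0. Then E_{να,1}(−λ t^{να}) = (sin(νπ)/π) · ∫_0^∞ ( r^{ν−1} / (r^{2ν} + 2 r^ν cos(νπ) + 1) ) · E_{α,1}(−r λ^{1/ν} t^α) dr, where E_{μ,1}(x) = ∑_{h=0}^∞ x^h/Γ(μh+1). -/
/-!
Write `K(r) = r^(ν-1) / (r^(2ν) + 2 r^ν cos νπ + 1)`. After absorbing `λ` into the time variable, the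
claim is that `F(t) = E_{να}(-t^{να})` equals `G(t) = (sin νπ / π) ∫ K(r) E_α(-r t^α) dr`, and this is
proved by comparing Laplace transforms.

* Integrating the series termwise, `F` has Laplace transform `p^{να-1}/(p^{να}+1)` for `p > 1`
  (`laplace_mittagLeffler`).
* By Fubini, `G` has Laplace transform `p^{α-1} (sin νπ / π) ∫ K(r)/(p^α + r) dr`, provided
  `E_α(-r t^α)` has transform `p^{α-1}/(p^α + r)` for all `r, p > 0`. The Stieltjes transform
  `(sin νπ / π) ∫ K(r)/(p + r) dr = p^{ν-1}/(p^ν + 1)` (`integral_lamperti_div`) then gives the same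
  value as for `F`. In the coordinate `r = p e^x` it follows from Cauchy's theorem for
  `P e^{νw} / (P e^{νw} + 1) / (e^w - 1)` in the strip `|Im w| ≤ π`, where `P = p^ν`: a multiple of
  `e^{w/2} / (e^w - 1)` is subtracted to remove the pole at `0`, and the integral of the
  subtracted term is elementary.
* Continuous functions on the half-line of at most exponential growth are determined by their
  Laplace transforms at large integers, by Weierstrass approximation (`eq_zero_of_laplace`).

The transform of `E_α(-r t^α)` is needed for every `p > 0`, whereas the termwise computation
converges only for `p^α > r`, and boundedness of `E_α` on the negative half-line is also needed.
Both are clear for `α = 1`, where `E_1 = exp`. The argument with `α = 1` then represents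
`E_ν(-t^ν)` as a mixture of exponentials (`mittagLeffler_eq_mixture_exp`), which yields both facts
for every index in `(0,1)`, and the argument can be run again with general `α`.
-/

open MeasureTheory

open Set Filter Topology

namespace MittagLefflerIndex

/-! ### Cauchy's theorem in a strip -/

theorem stripDen_ne_zero {P ν : ℝ} (hP : 0 < P) (hν0 : 0 < ν) {w : ℂ} (hw : |w.im| < Real.pi / ν) :
    (P : ℂ) * Complex.exp (ν * w) + 1 ≠ 0 := by
  intro h
  have hre := congrArg Complex.re h
  have him := congrArg Complex.im h
  simp only [Complex.add_re, Complex.add_im, Complex.re_ofReal_mul, Complex.im_ofReal_mul,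
    Complex.exp_re, Complex.exp_im, Complex.one_re, Complex.one_im, Complex.zero_re,
    Complex.zero_im, add_zero] at hre him
  have h1 : |ν * w.im| < Real.pi := by
    rw [abs_mul, abs_of_pos hν0, mul_comm]
    exact (lt_div_iff₀ hν0).1 hw
  have he := Real.exp_pos (ν * w.re)
  have hs : Real.sin (ν * w.im) = 0 := by
    have h2 : P * Real.exp (ν * w.re) ≠ 0 := by positivity
    rcases mul_eq_zero.1 ((mul_assoc _ _ _).trans him) with h3 | h3
    · exact absurd h3 h2
    · exact h3
  have h0 : ν * w.im = 0 :=
    (Real.sin_eq_zero_iff_of_lt_of_lt (abs_lt.1 h1).1 (abs_lt.1 h1).2).1 hs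
  rw [h0, Real.cos_zero] at hre
  have : 0 < P * (Real.exp (ν * w.re) * 1) := by positivity
  linarith

/-- The analytic continuation of `x ↦ P e^{νx} / (P e^{νx} + 1)` to a horizontal strip. -/
noncomputable def stripPhi (P ν : ℝ) (w : ℂ) : ℂ :=
  P * Complex.exp (ν * w) / (P * Complex.exp (ν * w) + 1)

/-- `stripPhi` minus the multiple of `e^{w/2}` with the same value at `0`. -/
noncomputable def stripNum (P ν : ℝ) (w : ℂ) : ℂ :=
  stripPhi P ν w - (P / (P + 1) : ℝ) * Complex.exp (w / 2)

/-- The function `stripNum P ν w / (e^w - 1)`, with its removable singularity at `0` filled in: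
numerator and denominator both vanish at `0`, so the quotient is written as one of slopes. -/
noncomputable def stripFun (P ν : ℝ) (w : ℂ) : ℂ :=
  dslope (stripNum P ν) 0 w / dslope Complex.exp 0 w

theorem stripNum_zero {P : ℝ} (ν : ℝ) : stripNum P ν 0 = 0 := by
  simp [stripNum, stripPhi]

theorem stripFun_of_ne {P ν : ℝ} {w : ℂ} (hw : w ≠ 0) :
    stripFun P ν w = stripNum P ν w / (Complex.exp w - 1) := by
  rw [stripFun, dslope_of_ne _ hw, dslope_of_ne _ hw, slope_def_field, slope_def_field,
    stripNum_zero, Complex.exp_zero]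
  rw [sub_zero, sub_zero, div_div_div_cancel_right₀ hw]

theorem differentiableOn_stripFun {P ν : ℝ} (hP : 0 < P) (hν0 : 0 < ν) (hν1 : ν < 1) :
    DifferentiableOn ℂ (stripFun P ν) {w | |w.im| ≤ Real.pi} := by
  have hopen : IsOpen {w : ℂ | |w.im| < Real.pi / ν} :=
    isOpen_lt (by fun_prop) (by fun_prop)
  have hmem : {w : ℂ | |w.im| < Real.pi / ν} ∈ 𝓝 (0 : ℂ) :=
    hopen.mem_nhds (by simp; positivity)
  have hlt : Real.pi < Real.pi / ν := by
    rw [lt_div_iff₀ hν0]; nlinarith [Real.pi_pos]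
  have hN : DifferentiableOn ℂ (stripNum P ν) {w | |w.im| < Real.pi / ν} := by
    intro w hw
    have := stripDen_ne_zero hP hν0 hw
    apply DifferentiableAt.differentiableWithinAt
    unfold stripNum stripPhi
    fun_prop (disch := assumption)
  have hN' := ((Complex.differentiableOn_dslope hmem).2 hN).mono
    (fun w (hw : |w.im| ≤ Real.pi) => lt_of_le_of_lt hw hlt)
  have hE : DifferentiableOn ℂ (dslope Complex.exp 0) {w | |w.im| ≤ Real.pi} :=
    ((Complex.differentiableOn_dslope (univ_mem)).2
      Complex.differentiable_exp.differentiableOn).mono (subset_univ _)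
  refine hN'.div hE ?_
  intro w hw
  rcases eq_or_ne w 0 with rfl | hne
  · simp [dslope_same]
  · rw [dslope_of_ne _ hne, slope_def_field, Complex.exp_zero, sub_zero]
    refine div_ne_zero ?_ hne
    intro h
    rw [sub_eq_zero, Complex.exp_eq_one_iff] at h
    obtain ⟨n, hn⟩ := h
    have him : w.im = n * (2 * Real.pi) := by rw [hn]; simp
    have hw' : |w.im| ≤ Real.pi := hw
    rw [him, abs_mul, abs_of_pos Real.two_pi_pos] at hw'
    have hn0 : n ≠ 0 := by
      rintro rfl
      exact hne (by simpa using hn)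
    have : (1 : ℝ) ≤ |(n : ℝ)| := by
      exact_mod_cast Int.one_le_abs hn0
    nlinarith [Real.pi_pos]

/-- Decay of `stripFun` at the right end of the strip. -/
theorem norm_stripFun_right {P ν : ℝ} (hP : 0 < P) {x y : ℝ}
    (h1 : 2 ≤ P * Real.exp (ν * x)) (h2 : 2 ≤ Real.exp x) :
    ‖stripFun P ν (x + y * Complex.I)‖ ≤ 6 * Real.exp (-(x / 2)) := by
  have hx : 0 < x := by
    by_contra h
    have := Real.exp_le_one_iff.2 (not_lt.1 h)
    linarith
  have hne : (x + y * Complex.I : ℂ) ≠ 0 := by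
    intro h; have := congrArg Complex.re h; simp at this; exact hx.ne' this
  rw [stripFun_of_ne hne, norm_div]
  have hden : Real.exp x / 2 ≤ ‖Complex.exp (x + y * Complex.I) - 1‖ := by
    have := norm_sub_norm_le (Complex.exp (x + y * Complex.I)) 1
    rw [Complex.norm_exp] at this
    simp at this
    linarith
  have hphi : ‖stripPhi P ν (x + y * Complex.I)‖ ≤ 2 := by
    have hn : ‖(P : ℂ) * Complex.exp (ν * (x + y * Complex.I))‖ = P * Real.exp (ν * x) := by
      rw [norm_mul, Complex.norm_exp]; simp [abs_of_pos hP]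
    have := norm_sub_norm_le ((P : ℂ) * Complex.exp (ν * (x + y * Complex.I))) (-1)
    rw [hn, sub_neg_eq_add] at this
    simp only [norm_neg, norm_one] at this
    rw [stripPhi, norm_div, hn, div_le_iff₀ (by linarith)]
    linarith
  have hc : P / (P + 1) ≤ 1 := by rw [div_le_one (by linarith)]; linarith
  have hc0 : 0 ≤ P / (P + 1) := by positivity
  have hexp : ‖Complex.exp ((x + y * Complex.I) / 2)‖ = Real.exp (x / 2) := by
    rw [Complex.norm_exp]; simp
  have hnum : ‖stripNum P ν (x + y * Complex.I)‖ ≤ 3 * Real.exp (x / 2) := by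
    refine (norm_sub_le _ _).trans ?_
    rw [norm_mul, hexp, Complex.norm_real, Real.norm_of_nonneg hc0]
    have : 1 ≤ Real.exp (x / 2) := Real.one_le_exp (by linarith)
    nlinarith
  rw [div_le_iff₀ (lt_of_lt_of_le (by positivity) hden)]
  refine hnum.trans ?_
  have e1 : Real.exp x = Real.exp (x / 2) * Real.exp (x / 2) := by
    rw [← Real.exp_add]; ring_nf
  have e2 : Real.exp (-(x / 2)) * Real.exp (x / 2) = 1 := by
    rw [← Real.exp_add]; simp
  calc 3 * Real.exp (x / 2) = 6 * Real.exp (-(x / 2)) * (Real.exp x / 2) := by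
        rw [e1]; linear_combination (-3 * Real.exp (x / 2)) * e2
    _ ≤ _ := by gcongr

/-- Decay of `stripFun` at the left end of the strip. -/
theorem norm_stripFun_left {P ν : ℝ} (hP : 0 < P) {x y : ℝ}
    (h1 : P * Real.exp (ν * x) ≤ 1 / 2) (h2 : Real.exp x ≤ 1 / 2) :
    ‖stripFun P ν (x + y * Complex.I)‖ ≤
      2 * (2 * (P * Real.exp (ν * x)) + Real.exp (x / 2)) := by
  have hx : x < 0 := by
    by_contra h
    have := Real.one_le_exp (not_lt.1 h)
    linarith
  have hne : (x + y * Complex.I : ℂ) ≠ 0 := by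
    intro h; have := congrArg Complex.re h; simp at this; exact hx.ne this
  rw [stripFun_of_ne hne, norm_div]
  have hden : 1 / 2 ≤ ‖Complex.exp (x + y * Complex.I) - 1‖ := by
    have := norm_sub_norm_le 1 (Complex.exp (x + y * Complex.I))
    rw [Complex.norm_exp, norm_sub_rev] at this
    simp at this
    linarith
  have hphi : ‖stripPhi P ν (x + y * Complex.I)‖ ≤ 2 * (P * Real.exp (ν * x)) := by
    have hn : ‖(P : ℂ) * Complex.exp (ν * (x + y * Complex.I))‖ = P * Real.exp (ν * x) := by
      rw [norm_mul, Complex.norm_exp]; simp [abs_of_pos hP]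
    have := norm_sub_norm_le (-1) ((P : ℂ) * Complex.exp (ν * (x + y * Complex.I)))
    rw [hn, norm_sub_rev, sub_neg_eq_add] at this
    simp only [norm_neg, norm_one] at this
    rw [stripPhi, norm_div, hn, div_le_iff₀ (by linarith)]
    have : 0 < P * Real.exp (ν * x) := by positivity
    nlinarith
  have hc : P / (P + 1) ≤ 1 := by rw [div_le_one (by linarith)]; linarith
  have hc0 : 0 ≤ P / (P + 1) := by positivity
  have hexp : ‖Complex.exp ((x + y * Complex.I) / 2)‖ = Real.exp (x / 2) := by
    rw [Complex.norm_exp]; simp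
  have hnum : ‖stripNum P ν (x + y * Complex.I)‖ ≤
      2 * (P * Real.exp (ν * x)) + Real.exp (x / 2) := by
    refine (norm_sub_le _ _).trans ?_
    rw [norm_mul, hexp, Complex.norm_real, Real.norm_of_nonneg hc0]
    have := Real.exp_pos (x / 2)
    nlinarith
  rw [div_le_iff₀ (lt_of_lt_of_le (by positivity) hden)]
  refine hnum.trans ?_
  have : 0 < 2 * (P * Real.exp (ν * x)) + Real.exp (x / 2) := by positivity
  nlinarith

/-- The integrals of `stripFun` along the lines `Im w = π` and `Im w = -π` agree, as symmetric
improper integrals. -/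
theorem tendsto_stripFun_edges {P ν : ℝ} (hP : 0 < P) (hν0 : 0 < ν) (hν1 : ν < 1) :
    Tendsto (fun R : ℝ => (∫ x : ℝ in (-R)..R, stripFun P ν (x + (-Real.pi : ℝ) * Complex.I)) -
      ∫ x : ℝ in (-R)..R, stripFun P ν (x + (Real.pi : ℝ) * Complex.I)) atTop (𝓝 0) := by
  have hpi := Real.pi_pos
  have hrect : ∀ R : ℝ,
      (∫ x : ℝ in (-R)..R, stripFun P ν (x + (-Real.pi : ℝ) * Complex.I)) -
      (∫ x : ℝ in (-R)..R, stripFun P ν (x + (Real.pi : ℝ) * Complex.I)) =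
      Complex.I • (∫ y : ℝ in (-Real.pi)..Real.pi, stripFun P ν ((-R : ℝ) + y * Complex.I)) -
      Complex.I • (∫ y : ℝ in (-Real.pi)..Real.pi, stripFun P ν ((R : ℝ) + y * Complex.I)) := by
    intro R
    have := Complex.integral_boundary_rect_eq_zero_of_differentiableOn (stripFun P ν)
      ⟨-R, -Real.pi⟩ ⟨R, Real.pi⟩ ((differentiableOn_stripFun hP hν0 hν1).mono ?_)
    · simp only [] at this
      linear_combination this
    · intro w hw
      have := hw.2
      simp only [mem_preimage] at this
      rw [uIcc_of_le (by linarith)] at this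
      exact abs_le.2 this
  simp_rw [hrect]
  have hexp : ∀ a : ℝ, 0 < a → Tendsto (fun R : ℝ => Real.exp (a * (-R))) atTop (𝓝 0) := by
    intro a ha
    refine Real.tendsto_exp_atBot.comp ?_
    exact (tendsto_neg_atTop_atBot).const_mul_atBot ha
  have hR : Tendsto (fun R : ℝ => ∫ y : ℝ in (-Real.pi)..Real.pi,
      stripFun P ν ((R : ℝ) + y * Complex.I)) atTop (𝓝 0) := by
    have hlim : Tendsto (fun R : ℝ => 6 * Real.exp (-(R / 2)) * |Real.pi - -Real.pi|) atTop
        (𝓝 0) := by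
      have := ((hexp (1 / 2) (by norm_num)).const_mul 6).mul_const (|Real.pi - -Real.pi|)
      simp only [mul_zero, zero_mul] at this
      refine this.congr fun R => ?_
      ring_nf
    refine squeeze_zero_norm' ?_ hlim
    have e1 : ∀ᶠ R : ℝ in atTop, 2 ≤ P * Real.exp (ν * R) :=
      (((Real.tendsto_exp_atTop.comp (tendsto_id.const_mul_atTop hν0))).const_mul_atTop
        hP).eventually_ge_atTop 2
    filter_upwards [e1, Real.tendsto_exp_atTop.eventually_ge_atTop 2] with R h1 h2
    exact intervalIntegral.norm_integral_le_of_norm_le_const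
      fun y _ => norm_stripFun_right hP h1 h2
  have hL : Tendsto (fun R : ℝ => ∫ y : ℝ in (-Real.pi)..Real.pi,
      stripFun P ν ((-R : ℝ) + y * Complex.I)) atTop (𝓝 0) := by
    have hlim : Tendsto (fun R : ℝ => 2 * (2 * (P * Real.exp (ν * (-R))) + Real.exp ((-R) / 2)) *
        |Real.pi - -Real.pi|) atTop (𝓝 0) := by
      have := ((((((hexp ν hν0).const_mul P).const_mul 2).add
        (hexp (1 / 2) (by norm_num))).const_mul 2)).mul_const (|Real.pi - -Real.pi|)
      simp only [mul_zero, zero_mul, add_zero] at this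
      refine this.congr fun R => ?_
      ring_nf
    refine squeeze_zero_norm' ?_ hlim
    have e1 : ∀ᶠ R : ℝ in atTop, P * Real.exp (ν * (-R)) ≤ 1 / 2 := by
      have := (hexp ν hν0).const_mul P
      rw [mul_zero] at this
      exact this.eventually_le_const (by norm_num)
    have e2 : ∀ᶠ R : ℝ in atTop, Real.exp (-R) ≤ 1 / 2 := by
      have := hexp 1 one_pos
      simp only [one_mul] at this
      exact this.eventually_le_const (by norm_num)
    filter_upwards [e1, e2] with R h1 h2
    exact intervalIntegral.norm_integral_le_of_norm_le_const
      fun y _ => norm_stripFun_left hP h1 h2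
  simpa using (hL.const_smul Complex.I).sub (hR.const_smul Complex.I)

/-! ### The Stieltjes transform of the Lamperti density -/

theorem lampertiDen_pos {ν : ℝ} (hν0 : 0 < ν) (hν1 : ν < 1) (a : ℝ) :
    0 < a ^ 2 + 2 * a * Real.cos (ν * Real.pi) + 1 := by
  have hs : 0 < Real.sin (ν * Real.pi) :=
    Real.sin_pos_of_pos_of_lt_pi (by positivity) (by nlinarith [Real.pi_pos])
  nlinarith [Real.sin_sq_add_cos_sq (ν * Real.pi), sq_nonneg (a + Real.cos (ν * Real.pi)),
    pow_pos hs 2]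

/-- The difference of the edge values of `stripFun` is `2i` times a real function: the integrand of
the Stieltjes transform in logarithmic coordinates, minus the term coming from `e^{w/2}`. -/
theorem stripFun_edge_sub {P ν : ℝ} (hP : 0 < P) (hν0 : 0 < ν) (hν1 : ν < 1) (x : ℝ) :
    stripFun P ν (x + (-Real.pi : ℝ) * Complex.I) - stripFun P ν (x + (Real.pi : ℝ) * Complex.I) =
      2 * Complex.I * ((P * Real.exp (ν * x) * Real.sin (ν * Real.pi) /
        ((P * Real.exp (ν * x)) ^ 2 + 2 * (P * Real.exp (ν * x)) * Real.cos (ν * Real.pi) + 1) /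
        (Real.exp x + 1) - P / (P + 1) * (Real.exp (x / 2) / (Real.exp x + 1)) : ℝ) : ℂ) := by
  have hpi := Real.pi_pos
  have hlt : Real.pi < Real.pi / ν := by rw [lt_div_iff₀ hν0]; nlinarith
  have d1 := stripDen_ne_zero (w := x + (-Real.pi : ℝ) * Complex.I) hP hν0
    (by simpa [abs_of_pos hpi] using hlt)
  have d2 := stripDen_ne_zero (w := x + (Real.pi : ℝ) * Complex.I) hP hν0
    (by simpa [abs_of_pos hpi] using hlt)
  have n1 : (x + (-Real.pi : ℝ) * Complex.I : ℂ) ≠ 0 := by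
    intro h; have := congrArg Complex.im h; simp at this
  have n2 : (x + (Real.pi : ℝ) * Complex.I : ℂ) ≠ 0 := by
    intro h; have := congrArg Complex.im h; simp at this
  have e1 : Complex.exp (ν * (x + (-Real.pi : ℝ) * Complex.I)) = Real.exp (ν * x) *
      (Real.cos (ν * Real.pi) - Real.sin (ν * Real.pi) * Complex.I) := by
    rw [show (ν * (x + (-Real.pi : ℝ) * Complex.I) : ℂ) =
      ((ν * x : ℝ) : ℂ) + ((-(ν * Real.pi) : ℝ) : ℂ) * Complex.I by push_cast; ring,
      Complex.exp_add, Complex.exp_mul_I, ← Complex.ofReal_cos, ← Complex.ofReal_sin,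
      Real.cos_neg, Real.sin_neg, ← Complex.ofReal_exp]
    push_cast; ring
  have e2 : Complex.exp (ν * (x + (Real.pi : ℝ) * Complex.I)) = Real.exp (ν * x) *
      (Real.cos (ν * Real.pi) + Real.sin (ν * Real.pi) * Complex.I) := by
    rw [show (ν * (x + (Real.pi : ℝ) * Complex.I) : ℂ) =
      ((ν * x : ℝ) : ℂ) + ((ν * Real.pi : ℝ) : ℂ) * Complex.I by push_cast; ring,
      Complex.exp_add, Complex.exp_mul_I, ← Complex.ofReal_cos, ← Complex.ofReal_sin,
      ← Complex.ofReal_exp]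
  have f1 : Complex.exp (x + (-Real.pi : ℝ) * Complex.I) = -Real.exp x := by
    rw [Complex.exp_add, Complex.exp_mul_I, ← Complex.ofReal_cos, ← Complex.ofReal_sin,
      ← Complex.ofReal_exp]
    simp
  have f2 : Complex.exp (x + (Real.pi : ℝ) * Complex.I) = -Real.exp x := by
    rw [Complex.exp_add, Complex.exp_mul_I, ← Complex.ofReal_cos, ← Complex.ofReal_sin,
      ← Complex.ofReal_exp]
    simp
  have g1 : Complex.exp ((x + (-Real.pi : ℝ) * Complex.I) / 2) =
      -(Real.exp (x / 2) * Complex.I) := by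
    rw [show ((x + (-Real.pi : ℝ) * Complex.I) / 2 : ℂ) =
      ((x / 2 : ℝ) : ℂ) + ((-(Real.pi / 2) : ℝ) : ℂ) * Complex.I by push_cast; ring,
      Complex.exp_add, Complex.exp_mul_I, ← Complex.ofReal_cos, ← Complex.ofReal_sin,
      Real.cos_neg, Real.sin_neg, ← Complex.ofReal_exp]
    simp
  have g2 : Complex.exp ((x + (Real.pi : ℝ) * Complex.I) / 2) =
      Real.exp (x / 2) * Complex.I := by
    rw [show ((x + (Real.pi : ℝ) * Complex.I) / 2 : ℂ) =
      ((x / 2 : ℝ) : ℂ) + ((Real.pi / 2 : ℝ) : ℂ) * Complex.I by push_cast; ring,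
      Complex.exp_add, Complex.exp_mul_I, ← Complex.ofReal_cos, ← Complex.ofReal_sin,
      ← Complex.ofReal_exp]
    simp
  rw [stripFun_of_ne n1, stripFun_of_ne n2, f1, f2]
  unfold stripNum stripPhi
  rw [g1, g2]
  rw [e1] at d1 ⊢
  rw [e2] at d2 ⊢
  have hD := (lampertiDen_pos hν0 hν1 (P * Real.exp (ν * x))).ne'
  have hX : (Real.exp x + 1 : ℝ) ≠ 0 := by positivity
  have hP1 : (P + 1 : ℝ) ≠ 0 := by positivity
  have hsc := Real.sin_sq_add_cos_sq (ν * Real.pi)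
  generalize Real.sin (ν * Real.pi) = s at *
  generalize Real.cos (ν * Real.pi) = k at *
  generalize Real.exp (ν * x) = b at *
  generalize Real.exp x = X at *
  generalize Real.exp (x / 2) = Y at *
  have hsc' : (s : ℂ) ^ 2 + (k : ℂ) ^ 2 = 1 := by exact_mod_cast hsc
  have hD' : ((P : ℂ) * b) ^ 2 + 2 * (P * b) * k + 1 ≠ 0 := by exact_mod_cast hD
  have hX' : (X : ℂ) + 1 ≠ 0 := by exact_mod_cast hX
  have hP1' : (P : ℂ) + 1 ≠ 0 := by exact_mod_cast hP1
  have key : (P : ℂ) * (b * (k - s * Complex.I)) / (P * (b * (k - s * Complex.I)) + 1) -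
      P * (b * (k + s * Complex.I)) / (P * (b * (k + s * Complex.I)) + 1) =
      -(2 * Complex.I) * (P * b * s / (((P : ℂ) * b) ^ 2 + 2 * (P * b) * k + 1)) := by
    have hprod : (P * (b * (k - s * Complex.I)) + 1) * (P * (b * (k + s * Complex.I)) + 1) =
        ((P : ℂ) * b) ^ 2 + 2 * (P * b) * k + 1 := by
      linear_combination ((P : ℂ) * b) ^ 2 * hsc' - ((P : ℂ) * b * s) ^ 2 * Complex.I_sq
    rw [div_sub_div _ _ d1 d2, hprod]
    rw [mul_div_assoc', div_left_inj' hD']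
    ring
  have hX'' : -(X : ℂ) - 1 = -(X + 1) := by ring
  rw [hX'', div_neg, div_neg]
  push_cast
  have : ∀ a b c d e : ℂ, -((a - c * -(d)) / e) - -((b - c * d) / e) =
    (-(a - b) - 2 * (c * d)) / e := by intros; ring
  rw [this, key]
  field_simp

theorem integral_sech (R : ℝ) : ∫ x : ℝ in (-R)..R, Real.exp (x / 2) / (Real.exp x + 1) =
    2 * Real.arctan (Real.exp (R / 2)) - 2 * Real.arctan (Real.exp ((-R) / 2)) := by
  apply intervalIntegral.integral_eq_sub_of_hasDerivAt
  · intro x _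
    have h1 : HasDerivAt (fun x : ℝ => x / 2) (1 / 2) x := (hasDerivAt_id x).div_const 2
    have := (h1.exp.arctan).const_mul 2
    refine this.congr_deriv ?_
    rw [← Real.exp_nat_mul, show ((2 : ℕ) : ℝ) * (x / 2) = x by push_cast; ring]
    field_simp
    ring
  · apply Continuous.intervalIntegrable
    have : ∀ x : ℝ, Real.exp x + 1 ≠ 0 := fun x => by positivity
    fun_prop (disch := assumption)

theorem tendsto_integral_sech :
    Tendsto (fun R : ℝ => ∫ x : ℝ in (-R)..R, Real.exp (x / 2) / (Real.exp x + 1)) atTop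
      (𝓝 Real.pi) := by
  simp_rw [integral_sech]
  have h1 : Tendsto (fun R : ℝ => Real.arctan (Real.exp (R / 2))) atTop (𝓝 (Real.pi / 2)) :=
    (tendsto_nhds_of_tendsto_nhdsWithin Real.tendsto_arctan_atTop).comp
      (Real.tendsto_exp_atTop.comp (tendsto_id.atTop_div_const two_pos))
  have h2 : Tendsto (fun R : ℝ => Real.arctan (Real.exp ((-R) / 2))) atTop (𝓝 0) := by
    have h3 : Tendsto (fun R : ℝ => Real.exp ((-R) / 2)) atTop (𝓝 0) :=
      Real.tendsto_exp_atBot.comp (tendsto_neg_atTop_atBot.atBot_div_const two_pos)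
    have := (Real.continuous_arctan.tendsto 0).comp h3
    rwa [Real.arctan_zero] at this
  have := (h1.const_mul 2).sub (h2.const_mul 2)
  convert this using 2
  ring

/-- The Stieltjes transform of the Lamperti density, in logarithmic coordinates. -/
theorem integral_lamperti_log {P ν : ℝ} (hP : 0 < P) (hν0 : 0 < ν) (hν1 : ν < 1) :
    ∫ x : ℝ, P * Real.exp (ν * x) * Real.sin (ν * Real.pi) /
        ((P * Real.exp (ν * x)) ^ 2 + 2 * (P * Real.exp (ν * x)) * Real.cos (ν * Real.pi) + 1) /
        (Real.exp x + 1) = Real.pi * (P / (P + 1)) := by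
  set A : ℝ → ℝ := fun x => P * Real.exp (ν * x) * Real.sin (ν * Real.pi) /
        ((P * Real.exp (ν * x)) ^ 2 + 2 * (P * Real.exp (ν * x)) * Real.cos (ν * Real.pi) + 1) /
        (Real.exp x + 1) with hA
  set B : ℝ → ℝ := fun x => Real.exp (x / 2) / (Real.exp x + 1) with hB
  have hX : ∀ x : ℝ, Real.exp x + 1 ≠ 0 := fun x => by positivity
  have hD : ∀ x : ℝ, (P * Real.exp (ν * x)) ^ 2 +
      2 * (P * Real.exp (ν * x)) * Real.cos (ν * Real.pi) + 1 ≠ 0 :=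
    fun x => (lampertiDen_pos hν0 hν1 _).ne'
  have hAc : Continuous A := by
    rw [hA]; fun_prop (disch := assumption)
  have hBc : Continuous B := by
    rw [hB]; fun_prop (disch := assumption)
  have hs : 0 < Real.sin (ν * Real.pi) :=
    Real.sin_pos_of_pos_of_lt_pi (by positivity) (by nlinarith [Real.pi_pos])
  have hA0 : ∀ x, 0 ≤ A x := fun x => by
    have := lampertiDen_pos hν0 hν1 (P * Real.exp (ν * x))
    rw [hA]; positivity
  have hline : ∀ y : ℝ, |y| ≤ Real.pi →
      Continuous (fun x : ℝ => stripFun P ν (x + y * Complex.I)) := by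
    intro y hy
    refine (differentiableOn_stripFun hP hν0 hν1).continuousOn.comp_continuous (by fun_prop) ?_
    intro x
    simpa using hy
  have h1 : Tendsto (fun R : ℝ => ∫ x in (-R)..R, (A x - P / (P + 1) * B x)) atTop (𝓝 0) := by
    have h := (tendsto_stripFun_edges hP hν0 hν1).const_mul (2 * Complex.I)⁻¹
    rw [mul_zero] at h
    have h' := (Complex.continuous_re.tendsto 0).comp h
    rw [Complex.zero_re] at h'
    refine h'.congr fun R => ?_
    simp only [Function.comp]
    rw [← intervalIntegral.integral_sub
      ((hline (-Real.pi) (by simp [abs_of_pos Real.pi_pos])).intervalIntegrable _ _)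
      ((hline Real.pi (by simp [abs_of_pos Real.pi_pos])).intervalIntegrable _ _)]
    simp_rw [stripFun_edge_sub hP hν0 hν1]
    rw [intervalIntegral.integral_const_mul, ← mul_assoc, inv_mul_cancel₀ (by simp), one_mul,
      intervalIntegral.integral_ofReal, Complex.ofReal_re]
  have h2 : Tendsto (fun R : ℝ => ∫ x in (-R)..R, A x) atTop (𝓝 (Real.pi * (P / (P + 1)))) := by
    have := h1.add (tendsto_integral_sech.const_mul (P / (P + 1)))
    rw [zero_add, mul_comm _ Real.pi] at this
    refine this.congr fun R => ?_
    rw [intervalIntegral.integral_sub (hAc.intervalIntegrable _ _)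
      ((hBc.const_mul _).intervalIntegrable _ _), intervalIntegral.integral_const_mul]
    ring
  have hint : Integrable A := by
    refine integrable_of_intervalIntegral_norm_tendsto (a := fun R : ℝ => -R) (b := fun R => R)
      (l := atTop) (Real.pi * (P / (P + 1))) (fun R => ?_) tendsto_neg_atTop_atBot tendsto_id ?_
    · exact (hAc.integrableOn_Icc).mono_set Ioc_subset_Icc_self
    · refine h2.congr fun R => ?_
      simp_rw [Real.norm_of_nonneg (hA0 _)]
  exact tendsto_nhds_unique
    (intervalIntegral_tendsto_integral hint tendsto_neg_atTop_atBot tendsto_id) h2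

/-- The Lamperti density without its normalizing constant `sin(νπ)/π`. -/
noncomputable def lamperti (ν r : ℝ) : ℝ :=
  r ^ (ν - 1) / (r ^ (2 * ν) + 2 * r ^ ν * Real.cos (ν * Real.pi) + 1)

theorem rpow_two_mul' {r : ℝ} (hr : 0 < r) (ν : ℝ) : r ^ (2 * ν) = (r ^ ν) ^ 2 := by
  rw [← Real.rpow_natCast, ← Real.rpow_mul hr.le]; congr 1; push_cast; ring

/-- The Stieltjes transform of the Lamperti density. -/
theorem integral_lamperti_div {ν p : ℝ} (hν0 : 0 < ν) (hν1 : ν < 1) (hp : 0 < p) :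
    Real.sin (ν * Real.pi) / Real.pi * ∫ r in Ioi (0 : ℝ), lamperti ν r / (p + r) =
      p ^ (ν - 1) / (p ^ ν + 1) := by
  have himg : (fun x : ℝ => p * Real.exp x) '' univ = Ioi 0 := by
    ext r
    simp only [image_univ, mem_range, mem_Ioi]
    constructor
    · rintro ⟨x, rfl⟩; positivity
    · intro hr
      exact ⟨Real.log (r / p), by rw [Real.exp_log (by positivity)]; field_simp⟩
  have hinj : InjOn (fun x : ℝ => p * Real.exp x) univ := by
    intro x _ y _ h
    exact Real.exp_injective (mul_left_cancel₀ hp.ne' h)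
  have hcv := integral_image_eq_integral_abs_deriv_smul (MeasurableSet.univ)
    (fun x _ => ((Real.hasDerivAt_exp x).const_mul p).hasDerivWithinAt) hinj
    (fun r => lamperti ν r / (p + r))
  rw [himg] at hcv
  rw [hcv, setIntegral_univ]
  have hlog := integral_lamperti_log (P := p ^ ν) (Real.rpow_pos_of_pos hp ν) hν0 hν1
  have hs : 0 < Real.sin (ν * Real.pi) :=
    Real.sin_pos_of_pos_of_lt_pi (by positivity) (by nlinarith [Real.pi_pos])
  have hpt : ∀ x : ℝ, |p * Real.exp x| • (lamperti ν (p * Real.exp x) / (p + p * Real.exp x)) =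
      (p * Real.sin (ν * Real.pi))⁻¹ * (p ^ ν * Real.exp (ν * x) * Real.sin (ν * Real.pi) /
        ((p ^ ν * Real.exp (ν * x)) ^ 2 +
          2 * (p ^ ν * Real.exp (ν * x)) * Real.cos (ν * Real.pi) + 1) /
        (Real.exp x + 1)) := by
    intro x
    have hr : 0 < p * Real.exp x := by positivity
    have hrν : (p * Real.exp x) ^ ν = p ^ ν * Real.exp (ν * x) := by
      rw [Real.mul_rpow hp.le (Real.exp_pos x).le, ← Real.exp_mul, mul_comm x]
    have hD := lampertiDen_pos hν0 hν1 (p ^ ν * Real.exp (ν * x))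
    rw [lamperti, rpow_two_mul' hr, Real.rpow_sub_one hr.ne', hrν, abs_of_pos hr, smul_eq_mul]
    have hD' := hD.ne'
    generalize p ^ ν * Real.exp (ν * x) = a at *
    have : p + p * Real.exp x ≠ 0 := by positivity
    have : Real.exp x + 1 ≠ 0 := by positivity
    field_simp
    ring
  simp_rw [hpt]
  rw [integral_const_mul, hlog, Real.rpow_sub_one hp.ne']
  field_simp

/-! ### The Mittag-Leffler series and its termwise Laplace transform -/

theorem rpow_mul_exp_neg_le_Gamma {T a : ℝ} (hT : 0 < T) (ha : 0 ≤ a) :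
    T ^ a * Real.exp (-T) ≤ Real.Gamma (a + 1) := by
  rw [Real.Gamma_eq_integral (by linarith), ← integral_exp_neg_Ioi T, ← integral_const_mul]
  have hint := Real.GammaIntegral_convergent (s := a + 1) (by linarith)
  have hI : IntegrableOn (fun x => Real.exp (-x)) (Ioi T) := by
    simpa using integrableOn_exp_mul_Ioi (a := -1) (by norm_num) T
  calc ∫ x in Ioi T, T ^ a * Real.exp (-x)
      ≤ ∫ x in Ioi T, Real.exp (-x) * x ^ (a + 1 - 1) := by
        refine setIntegral_mono_on (hI.const_mul _)
          (hint.mono_set (Ioi_subset_Ioi hT.le)) measurableSet_Ioi fun x hx => ?_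
        rw [mul_comm, add_sub_cancel_right]
        have : T ^ a ≤ x ^ a := Real.rpow_le_rpow hT.le (le_of_lt hx) ha
        gcongr
    _ ≤ ∫ x in Ioi 0, Real.exp (-x) * x ^ (a + 1 - 1) := by
        refine setIntegral_mono_set hint ?_ (Ioi_subset_Ioi hT.le).eventuallyLE
        filter_upwards [ae_restrict_mem measurableSet_Ioi] with x hx
        have : (0 : ℝ) < x := hx
        simp only [Pi.zero_apply]; positivity

/-- A geometric majorant of the Mittag-Leffler series, obtained by restricting the Gamma integral
to `(2t, ∞)`. -/
theorem term_le {μ x t : ℝ} (hμ : 0 < μ) (ht : 0 < t) (hx : |x| ≤ t ^ μ) (h : ℕ) :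
    ‖x ^ h / Real.Gamma (μ * h + 1)‖ ≤ Real.exp (2 * t) * ((2 : ℝ) ^ (-μ)) ^ h := by
  have hG := rpow_mul_exp_neg_le_Gamma (T := 2 * t) (a := μ * h) (by positivity) (by positivity)
  have hGpos : 0 < Real.Gamma (μ * h + 1) := Real.Gamma_pos_of_pos (by positivity)
  rw [norm_div, norm_pow, Real.norm_eq_abs, Real.norm_of_nonneg hGpos.le, div_le_iff₀ hGpos]
  have e1 : (2 * t) ^ (μ * h) = ((2 : ℝ) ^ μ) ^ h * (t ^ μ) ^ h := by
    rw [Real.mul_rpow two_pos.le ht.le, Real.rpow_mul two_pos.le, Real.rpow_mul ht.le,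
      Real.rpow_natCast, Real.rpow_natCast]
  have e2 : ((2 : ℝ) ^ (-μ)) ^ h * ((2 : ℝ) ^ μ) ^ h = 1 := by
    rw [← mul_pow, ← Real.rpow_add two_pos]; simp
  have e3 : Real.exp (2 * t) * Real.exp (-(2 * t)) = 1 := by rw [← Real.exp_add]; simp
  calc |x| ^ h ≤ (t ^ μ) ^ h := by gcongr
    _ = Real.exp (2 * t) * ((2 : ℝ) ^ (-μ)) ^ h * ((2 * t) ^ (μ * h) * Real.exp (-(2 * t))) := by
        rw [e1]
        linear_combination (-(t ^ μ) ^ h) * e2 -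
          (((2 : ℝ) ^ (-μ)) ^ h * ((2 : ℝ) ^ μ) ^ h * (t ^ μ) ^ h) * e3
    _ ≤ _ := by gcongr

theorem summable_majorant {μ : ℝ} (hμ : 0 < μ) (t : ℝ) :
    Summable fun h : ℕ => Real.exp (2 * t) * ((2 : ℝ) ^ (-μ)) ^ h :=
  (summable_geometric_of_lt_one (by positivity)
    (Real.rpow_lt_one_of_one_lt_of_neg one_lt_two (by linarith))).mul_left _

theorem norm_mittagLeffler_le {μ x t : ℝ} (hμ : 0 < μ) (ht : 0 < t) (hx : |x| ≤ t ^ μ) :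
    ‖mittagLeffler μ 1 x‖ ≤ Real.exp (2 * t) * (1 - (2 : ℝ) ^ (-μ))⁻¹ := by
  have hg := hasSum_geometric_of_lt_one (r := (2 : ℝ) ^ (-μ)) (by positivity)
    (Real.rpow_lt_one_of_one_lt_of_neg one_lt_two (by linarith))
  exact tsum_of_norm_bounded (hg.mul_left _) (term_le hμ ht hx)

theorem continuous_mittagLeffler {μ : ℝ} (hμ : 0 < μ) : Continuous (mittagLeffler μ 1) := by
  rw [continuous_iff_continuousAt]
  intro x
  set t : ℝ := (|x| + 1) ^ (1 / μ) with ht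
  have ht0 : 0 < t := by positivity
  have htμ : t ^ μ = |x| + 1 := by
    rw [ht, ← Real.rpow_mul (by positivity), one_div_mul_cancel hμ.ne', Real.rpow_one]
  have hc : ContinuousOn (mittagLeffler μ 1) {y | |y| < |x| + 1} := by
    unfold mittagLeffler
    refine continuousOn_tsum (fun h => by fun_prop) (summable_majorant hμ t) ?_
    intro h y hy
    exact term_le hμ ht0 (by rw [htμ]; exact le_of_lt hy) h
  exact hc.continuousAt ((isOpen_lt (by fun_prop) (by fun_prop)).mem_nhds (by simp))

theorem integrableOn_rpow_mul_exp {a p : ℝ} (ha : 0 ≤ a) (hp : 0 < p) :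
    IntegrableOn (fun t : ℝ => t ^ a * Real.exp (-(p * t))) (Ioi 0) := by
  have := integrableOn_rpow_mul_exp_neg_mul_rpow (p := 1) (s := a) (b := p) (by linarith)
    one_pos hp
  simpa using this

/-- Termwise Laplace transform of the Mittag-Leffler function; the series converges for `1 < p`. -/
theorem laplace_mittagLeffler {μ p : ℝ} (hμ : 0 < μ) (hp : 1 < p) :
    ∫ t in Ioi (0 : ℝ), Real.exp (-(p * t)) * mittagLeffler μ 1 (-t ^ μ) =
      p ^ (μ - 1) / (p ^ μ + 1) := by
  have hp0 : 0 < p := by linarith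
  set q : ℝ := p ^ (-μ) with hq
  have hq0 : 0 < q := by positivity
  have hq1 : q < 1 := Real.rpow_lt_one_of_one_lt_of_neg hp (by linarith)
  have hterm : ∀ h : ℕ, ∫ t in Ioi (0 : ℝ), t ^ (μ * h) * Real.exp (-(p * t)) =
      q ^ h * p⁻¹ * Real.Gamma (μ * h + 1) := by
    intro h
    have := Real.integral_rpow_mul_exp_neg_mul_Ioi (a := μ * h + 1) (r := p) (by positivity) hp0
    rw [add_sub_cancel_right] at this
    rw [this, hq, one_div, Real.rpow_add (by positivity), Real.rpow_one, Real.rpow_mul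
      (by positivity), Real.rpow_natCast, Real.inv_rpow hp0.le, ← Real.rpow_neg hp0.le]
  have hGpos : ∀ h : ℕ, 0 < Real.Gamma (μ * h + 1) := fun h =>
    Real.Gamma_pos_of_pos (by positivity)
  have hF : ∀ (h : ℕ), ∀ t ∈ Ioi (0 : ℝ),
      Real.exp (-(p * t)) * ((-t ^ μ) ^ h / Real.Gamma (μ * h + 1)) =
      ((-1) ^ h / Real.Gamma (μ * h + 1)) * (t ^ (μ * h) * Real.exp (-(p * t))) := by
    intro h t ht
    rw [neg_pow, ← Real.rpow_natCast (t ^ μ), ← Real.rpow_mul (le_of_lt ht)]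
    ring
  have hint : ∀ h : ℕ, IntegrableOn (fun t : ℝ =>
      Real.exp (-(p * t)) * ((-t ^ μ) ^ h / Real.Gamma (μ * h + 1))) (Ioi 0) := by
    intro h
    refine IntegrableOn.congr_fun ?_ (fun t ht => (hF h t ht).symm) measurableSet_Ioi
    exact (integrableOn_rpow_mul_exp (by positivity) hp0).const_mul _
  have hnorm : ∀ h : ℕ, ∫ t in Ioi (0 : ℝ),
      ‖Real.exp (-(p * t)) * ((-t ^ μ) ^ h / Real.Gamma (μ * h + 1))‖ = q ^ h * p⁻¹ := by
    intro h
    have : ∀ t ∈ Ioi (0 : ℝ), ‖Real.exp (-(p * t)) * ((-t ^ μ) ^ h / Real.Gamma (μ * h + 1))‖ =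
        (Real.Gamma (μ * h + 1))⁻¹ * (t ^ (μ * h) * Real.exp (-(p * t))) := by
      intro t ht
      have ht' : (0 : ℝ) < t := ht
      rw [hF h t ht, norm_mul, norm_div, norm_pow, norm_neg, norm_one, one_pow,
        Real.norm_of_nonneg (hGpos h).le, Real.norm_of_nonneg (by positivity), one_div]
    rw [setIntegral_congr_fun measurableSet_Ioi this, integral_const_mul, hterm]
    field_simp [(hGpos h).ne']
  have hval : ∀ h : ℕ, ∫ t in Ioi (0 : ℝ),
      Real.exp (-(p * t)) * ((-t ^ μ) ^ h / Real.Gamma (μ * h + 1)) = p⁻¹ * (-q) ^ h := by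
    intro h
    rw [setIntegral_congr_fun measurableSet_Ioi (hF h), integral_const_mul, hterm, neg_pow q]
    field_simp [(hGpos h).ne']
  have hsum := hasSum_integral_of_summable_integral_norm (μ := volume.restrict (Ioi (0 : ℝ))) hint
    (by simp_rw [hnorm]; exact (summable_geometric_of_lt_one hq0.le hq1).mul_right _)
  simp_rw [hval] at hsum
  have hsum' := (hasSum_geometric_of_norm_lt_one (ξ := -q)
    (by rw [norm_neg, Real.norm_of_nonneg hq0.le]; exact hq1)).mul_left p⁻¹
  have := hsum'.unique hsum
  simp_rw [tsum_mul_left] at this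
  unfold mittagLeffler
  rw [← this, hq, Real.rpow_sub_one hp0.ne', Real.rpow_neg hp0.le]
  have : 0 < p ^ μ := by positivity
  rw [sub_neg_eq_add]
  field_simp

/-! ### Uniqueness for the Laplace transform -/

/-- Uniqueness for the Laplace transform, from its values at large integers. After the
substitution `x = e^{-t}` the hypothesis says that a continuous function on `[0,1]` has vanishing
moments, and the Weierstrass approximation theorem applies. -/
theorem eq_zero_of_laplace {f : ℝ → ℝ} {C : ℝ} (hf : ContinuousOn f (Ici 0))
    (hC : ∀ t, 0 < t → |f t| ≤ C * Real.exp (2 * t))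
    (hL : ∀ n : ℕ, ∫ t in Ioi (0 : ℝ), Real.exp (-((n + 4 : ℝ) * t)) * f t = 0) :
    ∀ t, 0 < t → f t = 0 := by
  have hC0 : 0 ≤ C := by
    have := (abs_nonneg _).trans (hC 1 one_pos)
    exact nonneg_of_mul_nonneg_left this (Real.exp_pos _)
  have hexp : IntegrableOn (fun t : ℝ => C * Real.exp (-(2 * t))) (Ioi 0) := by
    have := integrableOn_exp_mul_Ioi (a := -2) (by norm_num) 0
    simpa [IntegrableOn] using this.const_mul C
  have hfm : AEStronglyMeasurable f (volume.restrict (Ioi 0)) :=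
    (hf.mono Ioi_subset_Ici_self).aestronglyMeasurable measurableSet_Ioi
  have hee : ∀ a b : ℝ, Real.exp a * Real.exp b = Real.exp (a + b) := fun a b =>
    (Real.exp_add a b).symm
  have hint : ∀ n : ℕ, IntegrableOn (fun t => Real.exp (-((n + 4 : ℝ) * t)) * f t) (Ioi 0) := by
    intro n
    refine Integrable.mono' hexp
      ((Continuous.aestronglyMeasurable (by fun_prop)).mul hfm) ?_
    filter_upwards [ae_restrict_mem measurableSet_Ioi] with t ht
    have ht' : (0 : ℝ) < t := ht
    rw [norm_mul, Real.norm_of_nonneg (Real.exp_pos _).le, Real.norm_eq_abs]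
    calc _ ≤ Real.exp (-((n + 4 : ℝ) * t)) * (C * Real.exp (2 * t)) := by
          gcongr; exact hC t ht'
      _ = C * (Real.exp (-((n + 4 : ℝ) * t) + 2 * t)) := by rw [← hee]; ring
      _ ≤ _ := by
          gcongr
          have : 0 ≤ (n : ℝ) * t := by positivity
          linarith
  -- the function whose moments on `[0,1]` vanish
  set u : ℝ → ℝ := fun x => x ^ 3 * f (-Real.log x) with hu
  have hue : ∀ t, u (Real.exp (-t)) = Real.exp (-(3 * t)) * f t := by
    intro t
    simp only [hu, Real.log_exp, neg_neg]
    rw [← Real.exp_nat_mul]; congr 2; push_cast; ring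
  have hux : ∀ x, 0 < x → x < 1 → |u x| ≤ C * x := by
    intro x h0 h1
    have hlog : 0 < -Real.log x := by have := Real.log_neg h0 h1; linarith
    have := hC _ hlog
    simp only [hu, abs_mul, abs_of_pos (pow_pos h0 3)]
    have e : Real.exp (2 * -Real.log x) = (x ^ 2)⁻¹ := by
      rw [show 2 * -Real.log x = -(((2 : ℕ) : ℝ) * Real.log x) by push_cast; ring, Real.exp_neg,
        Real.exp_nat_mul, Real.exp_log h0]
    rw [e] at this
    calc x ^ 3 * |f (-Real.log x)| ≤ x ^ 3 * (C * (x ^ 2)⁻¹) := by gcongr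
      _ = C * x := by field_simp
  have huc : ContinuousOn u (Icc 0 1) := by
    intro x hx
    rcases hx.1.eq_or_lt with rfl | h0
    · have hu0 : u 0 = 0 := by simp [hu]
      rw [ContinuousWithinAt, hu0]
      refine squeeze_zero_norm' (a := fun x => C * x) ?_ ?_
      · have h1 : ∀ᶠ x : ℝ in 𝓝[Icc 0 1] 0, x < 1 :=
          nhdsWithin_le_nhds (Iio_mem_nhds one_pos)
        filter_upwards [h1, self_mem_nhdsWithin] with x hx1 hx
        rcases hx.1.eq_or_lt with rfl | h
        · simp [hu0]
        · exact hux x h hx1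
      · have : Tendsto (fun x : ℝ => C * x) (𝓝 0) (𝓝 (C * 0)) :=
          (continuous_const.mul continuous_id).tendsto 0
        rw [mul_zero] at this
        exact this.mono_left nhdsWithin_le_nhds
    · refine ContinuousWithinAt.mul (by fun_prop) ?_
      have hl : ContinuousWithinAt (fun x => -Real.log x) (Icc 0 1) x :=
        (Real.continuousAt_log h0.ne').neg.continuousWithinAt
      exact (hf _ (by simpa using Real.log_nonpos hx.1 hx.2)).comp hl
        (fun y hy => by simpa using Real.log_nonpos hy.1 hy.2)
  -- all integrals against polynomials in `e^{-t}` vanish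
  have hpoly : ∀ q : Polynomial ℝ,
      IntegrableOn (fun t => Real.exp (-(4 * t)) * f t * q.eval (Real.exp (-t))) (Ioi 0) ∧
      ∫ t in Ioi (0 : ℝ), Real.exp (-(4 * t)) * f t * q.eval (Real.exp (-t)) = 0 := by
    intro q
    have heq : ∀ t, Real.exp (-(4 * t)) * f t * q.eval (Real.exp (-t)) =
        ∑ i ∈ Finset.range (q.natDegree + 1),
          q.coeff i * (Real.exp (-((i + 4 : ℝ) * t)) * f t) := by
      intro t
      rw [Polynomial.eval_eq_sum_range, Finset.mul_sum]
      refine Finset.sum_congr rfl fun i _ => ?_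
      rw [← Real.exp_nat_mul, show -((i + 4 : ℝ) * t) = -(4 * t) + i * (-t) by ring, Real.exp_add]
      ring
    simp_rw [heq]
    refine ⟨integrable_finsetSum _ fun i _ => (hint i).const_mul _, ?_⟩
    rw [integral_finsetSum _ fun i _ => (hint i).const_mul _]
    simp_rw [integral_const_mul, hL, mul_zero, Finset.sum_const_zero]
  have h4 : IntegrableOn (fun t => Real.exp (-(4 * t)) * f t) (Ioi 0) := by
    simpa using hint 0
  have hub : ∀ t ∈ Ioi (0 : ℝ), ‖u (Real.exp (-t))‖ ≤ C := by
    intro t ht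
    have h1 : Real.exp (-t) < 1 := Real.exp_lt_one_iff.2 (by simpa using ht)
    exact (hux _ (Real.exp_pos _) h1).trans (mul_le_of_le_one_right hC0 h1.le)
  have hum : AEStronglyMeasurable (fun t => u (Real.exp (-t))) (volume.restrict (Ioi 0)) := by
    simp_rw [hue]
    exact (Continuous.aestronglyMeasurable (by fun_prop)).mul hfm
  have hgi : IntegrableOn (fun t => Real.exp (-(4 * t)) * f t * u (Real.exp (-t))) (Ioi 0) := by
    refine Integrable.mul_bdd (c := C) h4 hum ?_
    filter_upwards [ae_restrict_mem measurableSet_Ioi] with t ht using hub t ht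
  have hzero : ∫ t in Ioi (0 : ℝ), Real.exp (-(4 * t)) * f t * u (Real.exp (-t)) = 0 := by
    set M := ∫ t in Ioi (0 : ℝ), ‖Real.exp (-(4 * t)) * f t‖ with hM
    have hM0 : 0 ≤ M := integral_nonneg fun _ => norm_nonneg _
    have hle : ∀ ε > 0,
        ‖∫ t in Ioi (0 : ℝ), Real.exp (-(4 * t)) * f t * u (Real.exp (-t))‖ ≤ M * ε := by
      intro ε hε
      obtain ⟨q, hq⟩ := exists_polynomial_near_of_continuousOn 0 1 u huc ε hε
      have h1 : ∫ t in Ioi (0 : ℝ), Real.exp (-(4 * t)) * f t * u (Real.exp (-t)) =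
          ∫ t in Ioi (0 : ℝ), (Real.exp (-(4 * t)) * f t * u (Real.exp (-t)) -
            Real.exp (-(4 * t)) * f t * q.eval (Real.exp (-t))) := by
        rw [integral_sub hgi (hpoly q).1, (hpoly q).2, sub_zero]
      rw [h1, hM, ← integral_mul_const]
      refine norm_integral_le_of_norm_le (h4.norm.mul_const ε) ?_
      filter_upwards [ae_restrict_mem measurableSet_Ioi] with t ht
      have ht' : (0 : ℝ) < t := ht
      rw [← mul_sub, norm_mul]
      gcongr
      rw [norm_sub_rev]
      exact (hq _ ⟨(Real.exp_pos _).le, Real.exp_le_one_iff.2 (by linarith)⟩).le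
    by_contra hne
    have hpos := norm_pos_iff.2 hne
    have := hle (‖∫ t in Ioi (0 : ℝ), Real.exp (-(4 * t)) * f t * u (Real.exp (-t))‖ / (M + 1))
      (by positivity)
    rw [mul_div_assoc', le_div_iff₀ (by positivity)] at this
    nlinarith
  have hsq : ∀ t, Real.exp (-(4 * t)) * f t * u (Real.exp (-t)) =
      Real.exp (-(7 * t)) * f t ^ 2 := by
    intro t
    rw [hue, show -(7 * t) = -(4 * t) + -(3 * t) by ring, Real.exp_add]; ring
  simp_rw [hsq] at hzero hgi
  have hae := (setIntegral_eq_zero_iff_of_nonneg_ae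
    (Eventually.of_forall fun t => by simp only [Pi.zero_apply]; positivity) hgi).1 hzero
  have hae' : f =ᵐ[volume.restrict (Ioi 0)] (fun _ => 0) := by
    filter_upwards [hae] with t ht
    have := Real.exp_pos (-(7 * t))
    simpa [this.ne'] using ht
  intro t ht
  exact Measure.eqOn_open_of_ae_eq hae' isOpen_Ioi (hf.mono Ioi_subset_Ici_self)
    continuousOn_const ht

/-! ### Integration against the Lamperti density -/

theorem lamperti_nonneg {ν r : ℝ} (hν0 : 0 < ν) (hν1 : ν < 1) (hr : 0 < r) :
    0 ≤ lamperti ν r := by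
  rw [lamperti, rpow_two_mul' hr]
  have := lampertiDen_pos hν0 hν1 (r ^ ν)
  positivity

theorem aestronglyMeasurable_lamperti (ν : ℝ) (s : Set ℝ) :
    AEStronglyMeasurable (lamperti ν) (volume.restrict s) := by
  unfold lamperti
  exact Measurable.aestronglyMeasurable (by fun_prop)

theorem integrableOn_lamperti {ν : ℝ} (hν0 : 0 < ν) (hν1 : ν < 1) :
    IntegrableOn (lamperti ν) (Ioi 0) := by
  have hs : 0 < Real.sin (ν * Real.pi) :=
    Real.sin_pos_of_pos_of_lt_pi (by positivity) (by nlinarith [Real.pi_pos])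
  have hsc := Real.sin_sq_add_cos_sq (ν * Real.pi)
  rw [← Ioc_union_Ioi_eq_Ioi zero_le_one, integrableOn_union]
  constructor
  · have h1 : IntegrableOn (fun r : ℝ => r ^ (ν - 1)) (Ioc 0 1) :=
      (intervalIntegrable_iff_integrableOn_Ioc_of_le zero_le_one).1
        (intervalIntegral.intervalIntegrable_rpow' (by linarith))
    refine Integrable.mono' (h1.mul_const (Real.sin (ν * Real.pi) ^ 2)⁻¹)
      (aestronglyMeasurable_lamperti ν _) ?_
    filter_upwards [ae_restrict_mem measurableSet_Ioc] with r hr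
    rw [Real.norm_of_nonneg (lamperti_nonneg hν0 hν1 hr.1), lamperti, rpow_two_mul' hr.1,
      div_eq_mul_inv]
    have := hr.1
    gcongr
    nlinarith [sq_nonneg (r ^ ν + Real.cos (ν * Real.pi))]
  · have h1 : IntegrableOn (fun r : ℝ => r ^ (-ν - 1)) (Ioi 1) :=
      integrableOn_Ioi_rpow_of_lt (by linarith) one_pos
    refine Integrable.mono' (h1.mul_const (Real.sin (ν * Real.pi) ^ 2)⁻¹)
      (aestronglyMeasurable_lamperti ν _) ?_
    filter_upwards [ae_restrict_mem measurableSet_Ioi] with r hr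
    have hr0 : 0 < r := one_pos.trans hr
    have hrν : 0 < r ^ ν := by positivity
    rw [Real.norm_of_nonneg (lamperti_nonneg hν0 hν1 hr0), lamperti, rpow_two_mul' hr0]
    have e : r ^ (-ν - 1) * (Real.sin (ν * Real.pi) ^ 2)⁻¹ =
        r ^ (ν - 1) / ((r ^ ν) ^ 2 * Real.sin (ν * Real.pi) ^ 2) := by
      rw [Real.rpow_sub_one hr0.ne', Real.rpow_sub_one hr0.ne', Real.rpow_neg hr0.le]
      field_simp
    rw [e]
    gcongr
    nlinarith [sq_nonneg (r ^ ν * Real.cos (ν * Real.pi) + 1)]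

/-- Interchange of the Laplace transform with integration against the Lamperti density. -/
theorem laplace_lamperti_swap {ν α p C : ℝ} {g : ℝ → ℝ} (hν0 : 0 < ν) (hν1 : ν < 1)
    (hg : Continuous g) (hb : ∀ x, 0 ≤ x → |g x| ≤ C) (hp : 0 < p) :
    ∫ t in Ioi (0 : ℝ), Real.exp (-(p * t)) * ∫ r in Ioi (0 : ℝ), lamperti ν r * g (r * t ^ α) =
      ∫ r in Ioi (0 : ℝ), lamperti ν r * ∫ t in Ioi (0 : ℝ),
        Real.exp (-(p * t)) * g (r * t ^ α) := by
  have hexp : IntegrableOn (fun t : ℝ => Real.exp (-(p * t))) (Ioi 0) := by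
    have := integrableOn_exp_mul_Ioi (a := -p) (by linarith) 0
    simpa [IntegrableOn] using this
  have hprod := Integrable.mul_prod hexp (integrableOn_lamperti hν0 hν1)
  have hI : Integrable (Function.uncurry fun t r : ℝ =>
      Real.exp (-(p * t)) * lamperti ν r * g (r * t ^ α))
      ((volume.restrict (Ioi 0)).prod (volume.restrict (Ioi 0))) := by
    have hm : Measurable fun z : ℝ × ℝ => g (z.2 * z.1 ^ α) :=
      hg.measurable.comp (by fun_prop)
    refine Integrable.mul_bdd (c := C) hprod hm.aestronglyMeasurable ?_
    rw [Measure.prod_restrict]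
    filter_upwards [ae_restrict_mem (measurableSet_Ioi.prod measurableSet_Ioi)] with z hz
    have h1 : (0 : ℝ) < z.1 := hz.1
    have h2 : (0 : ℝ) < z.2 := hz.2
    exact hb _ (by positivity)
  have := integral_integral_swap hI
  simp_rw [← integral_const_mul]
  simp only [← mul_assoc]
  simp only [mul_comm (lamperti ν _) (Real.exp _)]
  exact this

/-- The mixture relation for an index `α` whose Mittag-Leffler function is bounded on the negative
half-line and has the expected Laplace transform. Both sides are continuous functions of `t` of at
most exponential growth, with the same Laplace transform. -/
theorem mixture_of_laplace {ν α C : ℝ} (hν0 : 0 < ν) (hν1 : ν < 1) (hα : 0 < α)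
    (hb : ∀ x, 0 ≤ x → |mittagLeffler α 1 (-x)| ≤ C)
    (hL : ∀ r p : ℝ, 0 < r → 0 < p →
      ∫ t in Ioi (0 : ℝ), Real.exp (-(p * t)) * mittagLeffler α 1 (-(r * t ^ α)) =
        p ^ (α - 1) / (p ^ α + r)) {t : ℝ} (ht : 0 < t) :
    mittagLeffler (ν * α) 1 (-t ^ (ν * α)) = Real.sin (ν * Real.pi) / Real.pi *
      ∫ r in Ioi (0 : ℝ), lamperti ν r * mittagLeffler α 1 (-(r * t ^ α)) := by
  set g : ℝ → ℝ := fun x => mittagLeffler α 1 (-x) with hg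
  have hgc : Continuous g := (continuous_mittagLeffler hα).comp continuous_neg
  set c := Real.sin (ν * Real.pi) / Real.pi with hc
  set G : ℝ → ℝ := fun t => c * ∫ r in Ioi (0 : ℝ), lamperti ν r * g (r * t ^ α) with hG
  set F : ℝ → ℝ := fun t => mittagLeffler (ν * α) 1 (-t ^ (ν * α)) with hF
  have hνα : 0 < ν * α := by positivity
  have hK := integrableOn_lamperti hν0 hν1
  have hFc : Continuous F := (continuous_mittagLeffler hνα).comp
    (Real.continuous_rpow_const hνα.le).neg
  have hbd : ∀ t ∈ Ici (0 : ℝ), ∀ᵐ r ∂(volume.restrict (Ioi (0 : ℝ))),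
      ‖lamperti ν r * g (r * t ^ α)‖ ≤ lamperti ν r * C := by
    intro t ht
    filter_upwards [ae_restrict_mem measurableSet_Ioi] with r hr
    have hr0 : (0 : ℝ) < r := hr
    have ht0 : (0 : ℝ) ≤ t := ht
    have hl := lamperti_nonneg hν0 hν1 hr0
    rw [norm_mul, Real.norm_of_nonneg hl, Real.norm_eq_abs]
    exact mul_le_mul_of_nonneg_left (hb _ (by positivity)) hl
  have hGc : ContinuousOn G (Ici 0) := by
    refine continuousOn_const.mul (continuousOn_of_dominated
      (bound := fun r => lamperti ν r * C) ?_ hbd (hK.mul_const C) ?_)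
    · intro t _
      exact (aestronglyMeasurable_lamperti ν _).mul
        (Continuous.aestronglyMeasurable (by fun_prop))
    · refine Eventually.of_forall fun r => Continuous.continuousOn ?_
      exact continuous_const.mul
        (hgc.comp (continuous_const.mul (Real.continuous_rpow_const hα.le)))
  set C1 := (1 - (2 : ℝ) ^ (-(ν * α)))⁻¹ with hC1
  set C2 := |c| * ∫ r in Ioi (0 : ℝ), lamperti ν r * C with hC2
  have hFb : ∀ t, 0 < t → |F t| ≤ C1 * Real.exp (2 * t) := by
    intro t ht
    rw [mul_comm]
    exact norm_mittagLeffler_le hνα ht (by rw [abs_neg, abs_of_pos (by positivity)])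
  have hGb : ∀ t, 0 < t → |G t| ≤ C2 * Real.exp (2 * t) := by
    intro t ht
    have h1 : |G t| ≤ C2 := by
      rw [hG, hC2]
      simp only [abs_mul]
      exact mul_le_mul_of_nonneg_left
        (norm_integral_le_of_norm_le (hK.mul_const C) (hbd t ht.le)) (abs_nonneg _)
    have h2 : 0 ≤ C2 := (abs_nonneg _).trans h1
    exact h1.trans (le_mul_of_one_le_right h2 (Real.one_le_exp (by positivity)))
  have hlap_int : ∀ (f : ℝ → ℝ) (D p : ℝ), 2 < p → ContinuousOn f (Ici 0) →
      (∀ t, 0 < t → |f t| ≤ D * Real.exp (2 * t)) →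
      IntegrableOn (fun t => Real.exp (-(p * t)) * f t) (Ioi 0) := by
    intro f D p hp hfc hfb
    have he : IntegrableOn (fun t : ℝ => D * Real.exp ((2 - p) * t)) (Ioi 0) :=
      (integrableOn_exp_mul_Ioi (by linarith) 0).const_mul D
    refine Integrable.mono' he ((Continuous.aestronglyMeasurable (by fun_prop)).mul
      ((hfc.mono Ioi_subset_Ici_self).aestronglyMeasurable measurableSet_Ioi)) ?_
    filter_upwards [ae_restrict_mem measurableSet_Ioi] with t ht
    rw [norm_mul, Real.norm_of_nonneg (Real.exp_pos _).le, Real.norm_eq_abs]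
    calc _ ≤ Real.exp (-(p * t)) * (D * Real.exp (2 * t)) := by gcongr; exact hfb t ht
      _ = D * Real.exp ((2 - p) * t) := by
        rw [show (2 - p) * t = -(p * t) + 2 * t by ring, Real.exp_add]; ring
  have hzero : ∀ t, 0 < t → F t - G t = 0 := by
    refine eq_zero_of_laplace (f := fun t => F t - G t) (C := C1 + C2)
      (hFc.continuousOn.sub hGc) ?_ ?_
    · intro t ht
      refine (abs_sub _ _).trans ?_
      rw [add_mul]
      exact add_le_add (hFb t ht) (hGb t ht)
    · intro n
      have hp : (2 : ℝ) < n + 4 := by have : (0 : ℝ) ≤ n := n.cast_nonneg; linarith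
      generalize (n + 4 : ℝ) = p at hp
      have hp0 : 0 < p := by linarith
      simp_rw [mul_sub]
      rw [integral_sub (hlap_int F C1 p hp hFc.continuousOn hFb) (hlap_int G C2 p hp hGc hGb)]
      have h1 : ∫ t in Ioi (0 : ℝ), Real.exp (-(p * t)) * F t =
          p ^ (ν * α - 1) / (p ^ (ν * α) + 1) := laplace_mittagLeffler hνα (by linarith)
      have h2 : ∫ t in Ioi (0 : ℝ), Real.exp (-(p * t)) * G t =
          p ^ (ν * α - 1) / (p ^ (ν * α) + 1) := by
        simp_rw [hG, mul_left_comm _ c]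
        rw [integral_const_mul, laplace_lamperti_swap hν0 hν1 hgc hb hp0]
        have h3 : ∀ r ∈ Ioi (0 : ℝ), lamperti ν r * ∫ t in Ioi (0 : ℝ),
            Real.exp (-(p * t)) * g (r * t ^ α) =
            p ^ (α - 1) * (lamperti ν r / (p ^ α + r)) := by
          intro r hr
          rw [hL r p hr hp0]; ring
        have hpα : 0 < p ^ α := by positivity
        rw [setIntegral_congr_fun measurableSet_Ioi h3, integral_const_mul, mul_left_comm,
          integral_lamperti_div hν0 hν1 hpα, Real.rpow_sub_one hp0.ne', Real.rpow_sub_one hpα.ne',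
          Real.rpow_sub_one hp0.ne', ← Real.rpow_mul hp0.le, mul_comm α ν]
        field_simp
      rw [h1, h2, sub_self]
  exact sub_eq_zero.1 (hzero t ht)

/-! ### Mixtures of exponentials and bootstrapping in the index -/

theorem mittagLeffler_one (x : ℝ) : mittagLeffler 1 1 x = Real.exp x := by
  rw [mittagLeffler, Real.exp_eq_exp_ℝ, NormedSpace.exp_eq_tsum_div]
  refine tsum_congr fun h => ?_
  rw [one_mul, Real.Gamma_nat_eq_factorial]

theorem integral_exp_neg_mul_Ioi {a : ℝ} (ha : 0 < a) :
    ∫ t in Ioi (0 : ℝ), Real.exp (-(a * t)) = 1 / a := by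
  have := integral_exp_mul_Ioi (a := -a) (by linarith) 0
  simpa [neg_mul] using this

theorem laplace_exp {r p : ℝ} (hr : 0 < r) (hp : 0 < p) :
    ∫ t in Ioi (0 : ℝ), Real.exp (-(p * t)) * Real.exp (-(r * t)) = 1 / (p + r) := by
  simp_rw [← Real.exp_add]
  rw [← integral_exp_neg_mul_Ioi (add_pos hp hr)]
  congr 1; ext t; congr 1; ring

theorem abs_mittagLeffler_one_neg_le (x : ℝ) (hx : 0 ≤ x) : |mittagLeffler 1 1 (-x)| ≤ 1 := by
  rw [mittagLeffler_one, abs_of_pos (Real.exp_pos _)]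
  exact Real.exp_le_one_iff.2 (by linarith)

theorem laplace_mittagLeffler_one (r p : ℝ) (hr : 0 < r) (hp : 0 < p) :
    ∫ t in Ioi (0 : ℝ), Real.exp (-(p * t)) * mittagLeffler 1 1 (-(r * t ^ (1 : ℝ))) =
      p ^ ((1 : ℝ) - 1) / (p ^ (1 : ℝ) + r) := by
  simp_rw [mittagLeffler_one, Real.rpow_one, sub_self, Real.rpow_zero]
  exact laplace_exp hr hp

/-- The Mittag-Leffler function as a mixture of exponentials (the case `α = 1`). -/
theorem mittagLeffler_eq_mixture_exp {ν t : ℝ} (hν0 : 0 < ν) (hν1 : ν < 1) (ht : 0 < t) :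
    mittagLeffler ν 1 (-t ^ ν) = Real.sin (ν * Real.pi) / Real.pi *
      ∫ r in Ioi (0 : ℝ), lamperti ν r * Real.exp (-(r * t ^ (1 : ℝ))) := by
  have := mixture_of_laplace hν0 hν1 one_pos abs_mittagLeffler_one_neg_le
    laplace_mittagLeffler_one ht
  simpa only [mul_one, mittagLeffler_one] using this

theorem exists_abs_mittagLeffler_neg_le {ν : ℝ} (hν0 : 0 < ν) (hν1 : ν < 1) :
    ∃ C, ∀ x, 0 ≤ x → |mittagLeffler ν 1 (-x)| ≤ C := by
  refine ⟨max |mittagLeffler ν 1 (-0)| (|Real.sin (ν * Real.pi) / Real.pi| *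
    ∫ r in Ioi (0 : ℝ), lamperti ν r), fun x hx => ?_⟩
  rcases hx.eq_or_lt with rfl | hx
  · exact le_max_left _ _
  · refine le_max_of_le_right ?_
    have hxν : (x ^ (1 / ν)) ^ ν = x := by
      rw [← Real.rpow_mul hx.le, one_div_mul_cancel hν0.ne', Real.rpow_one]
    have h := mittagLeffler_eq_mixture_exp hν0 hν1 (t := x ^ (1 / ν)) (by positivity)
    rw [hxν] at h
    rw [h, abs_mul]
    refine mul_le_mul_of_nonneg_left ?_ (abs_nonneg _)
    rw [← Real.norm_eq_abs]
    refine norm_integral_le_of_norm_le (integrableOn_lamperti hν0 hν1) ?_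
    filter_upwards [ae_restrict_mem measurableSet_Ioi] with r hr
    have hr0 : (0 : ℝ) < r := hr
    have hl := lamperti_nonneg hν0 hν1 hr0
    rw [norm_mul, Real.norm_of_nonneg hl, Real.norm_of_nonneg (Real.exp_pos _).le]
    refine mul_le_of_le_one_right hl (Real.exp_le_one_iff.2 ?_)
    have : 0 < r * (x ^ (1 / ν)) ^ (1 : ℝ) := by positivity
    linarith

/-- The Laplace transform of `t ↦ E_ν(-t^ν)` on the whole half-line, beyond the range of
convergence of the termwise transform. -/
theorem laplace_mittagLeffler_of_lt_one {ν p : ℝ} (hν0 : 0 < ν) (hν1 : ν < 1) (hp : 0 < p) :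
    ∫ t in Ioi (0 : ℝ), Real.exp (-(p * t)) * mittagLeffler ν 1 (-t ^ ν) =
      p ^ (ν - 1) / (p ^ ν + 1) := by
  have h1 : ∀ t ∈ Ioi (0 : ℝ), Real.exp (-(p * t)) * mittagLeffler ν 1 (-t ^ ν) =
      Real.sin (ν * Real.pi) / Real.pi * (Real.exp (-(p * t)) *
        ∫ r in Ioi (0 : ℝ), lamperti ν r * Real.exp (-(r * t ^ (1 : ℝ)))) := by
    intro t ht
    rw [mittagLeffler_eq_mixture_exp hν0 hν1 ht]; ring
  rw [setIntegral_congr_fun measurableSet_Ioi h1, integral_const_mul,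
    laplace_lamperti_swap (g := fun x => Real.exp (-x)) (C := 1) hν0 hν1 (by fun_prop) ?_ hp]
  · rw [← integral_lamperti_div hν0 hν1 hp]
    congr 1
    refine setIntegral_congr_fun measurableSet_Ioi fun r hr => ?_
    simp only [Real.rpow_one]
    rw [laplace_exp hr hp]; ring
  · intro x hx
    rw [abs_of_pos (Real.exp_pos _)]
    exact Real.exp_le_one_iff.2 (by linarith)

theorem laplace_mittagLeffler_scaled {ν : ℝ} (hν0 : 0 < ν) (hν1 : ν < 1) (r p : ℝ) (hr : 0 < r)
    (hp : 0 < p) :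
    ∫ t in Ioi (0 : ℝ), Real.exp (-(p * t)) * mittagLeffler ν 1 (-(r * t ^ ν)) =
      p ^ (ν - 1) / (p ^ ν + r) := by
  set c := r ^ (1 / ν) with hc
  have hc0 : 0 < c := by positivity
  have hcν : c ^ ν = r := by
    rw [hc, ← Real.rpow_mul hr.le, one_div_mul_cancel hν0.ne', Real.rpow_one]
  have h1 : ∀ t ∈ Ioi (0 : ℝ), Real.exp (-(p * t)) * mittagLeffler ν 1 (-(r * t ^ ν)) =
      (fun τ => Real.exp (-(p / c * τ)) * mittagLeffler ν 1 (-τ ^ ν)) (c * t) := by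
    intro t ht
    simp only
    rw [Real.mul_rpow hc0.le (le_of_lt ht), hcν]
    congr 3
    field_simp
  rw [setIntegral_congr_fun measurableSet_Ioi h1,
    integral_comp_mul_left_Ioi
      (fun τ => Real.exp (-(p / c * τ)) * mittagLeffler ν 1 (-τ ^ ν)) 0 hc0, mul_zero,
    laplace_mittagLeffler_of_lt_one hν0 hν1 (by positivity), Real.rpow_sub_one (by positivity),
    Real.rpow_sub_one hp.ne', Real.div_rpow hp.le hc0.le, hcν, smul_eq_mul]
  field_simp

theorem mixture {ν α t : ℝ} (hν0 : 0 < ν) (hν1 : ν < 1) (hα0 : 0 < α) (hα1 : α ≤ 1)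
    (ht : 0 < t) :
    mittagLeffler (ν * α) 1 (-t ^ (ν * α)) = Real.sin (ν * Real.pi) / Real.pi *
      ∫ r in Ioi (0 : ℝ), lamperti ν r * mittagLeffler α 1 (-(r * t ^ α)) := by
  rcases hα1.lt_or_eq with h | rfl
  · obtain ⟨C, hC⟩ := exists_abs_mittagLeffler_neg_le hα0 h
    exact mixture_of_laplace hν0 hν1 hα0 hC (laplace_mittagLeffler_scaled hα0 h) ht
  · exact mixture_of_laplace hν0 hν1 one_pos abs_mittagLeffler_one_neg_le
      laplace_mittagLeffler_one ht

end MittagLefflerIndex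

/-- Formula (gen-mitta): the integral relation between Mittag--Leffler functions
of different indices, via the Lamperti density. -/
theorem mittagLeffler_index_product_integral (ν α lam t : ℝ) (hν0 : 0 < ν) (hν1 : ν < 1)
    (hα0 : 0 < α) (hα1 : α ≤ 1) (hlam : 0 < lam) (ht : 0 < t) :
    mittagLeffler (ν * α) 1 (-lam * t ^ (ν * α))
      = (Real.sin (ν * Real.pi) / Real.pi) *
          ∫ r in Set.Ioi (0 : ℝ),
            (r ^ (ν - 1) / (r ^ (2 * ν) + 2 * r ^ ν * Real.cos (ν * Real.pi) + 1)) *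
              mittagLeffler α 1 (-r * lam ^ (1 / ν) * t ^ α) := by
  -- `λ` is absorbed into the time variable: `τ^α = λ^{1/ν} t^α` and `τ^{να} = λ t^{να}`
  have hτ : 0 < lam ^ (1 / (ν * α)) * t := by positivity
  have h1 : (lam ^ (1 / (ν * α)) * t) ^ α = lam ^ (1 / ν) * t ^ α := by
    rw [Real.mul_rpow (by positivity) ht.le, ← Real.rpow_mul hlam.le]
    congr 2
    field_simp
  have h2 : (lam ^ (1 / (ν * α)) * t) ^ (ν * α) = lam * t ^ (ν * α) := by
    rw [Real.mul_rpow (by positivity) ht.le, ← Real.rpow_mul hlam.le,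
      one_div_mul_cancel (by positivity), Real.rpow_one]
  have h := MittagLefflerIndex.mixture hν0 hν1 hα0 hα1 hτ
  rw [h1, h2] at h
  rw [neg_mul, h]
  simp only [MittagLefflerIndex.lamperti, neg_mul, mul_assoc]
end
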